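/- Let (A(n))_{n∈ℕ} be a sequence of i.i.d. random d×d matrices with entries in ℝ_max, almost surely having at least one finite entry on each row, such that max{|A_{ij}(0)| : A_{ij}(0) ≠ -∞} is integrable. Then (1/n)·x(n,0) converges almost surely if and only if for every strongly connected component c of 𝒢(A), the submatrix A^{{c}} of A(0) indexed by H_c almost surely has at least one finite entry on each row. In that case, for every i ∈ {1,…,d}, lim_n (1/n)·x_i(n,0) = max{ γ^{(c)} : c a strongly connected component with i → c } almost surely. -/

import Mathlib

open Filter MeasureTheory ProbabilityTheory Topology

noncomputable section

/-- Max-plus action of a `d × d` matrix over `ℝ_max = ℝ ∪ {-∞}` (encoded as `EReal`,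
with `⊤` never used) on a vector: `(A ⊗ v) i = max_j (A i j + v j)`. -/
def mpVec {d : ℕ} (A : Fin d → Fin d → EReal) (v : Fin d → EReal) : Fin d → EReal :=
  fun i => ⨆ j, A i j + v j

/-- `appProd n f v = f 0 ⊗ f 1 ⊗ ⋯ ⊗ f (n-1) ⊗ v` in the max-plus algebra. -/
def appProd {d : ℕ} : ℕ → (ℕ → Fin d → Fin d → EReal) → (Fin d → EReal) → Fin d → EReal
  | 0, _, v => v
  | n + 1, f, v => mpVec (f 0) (appProd n (fun k => f (k + 1)) v)

/-- `xvec f n = f (n-1) ⊗ ⋯ ⊗ f 0 ⊗ 0`; with `f m = A(m)` this is `x(n, 0)`. -/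
def xvec {d : ℕ} (f : ℕ → Fin d → Fin d → EReal) : ℕ → Fin d → EReal
  | 0 => fun _ => 0
  | n + 1 => mpVec (f n) (xvec f n)

/-- `lvec n f = f 0 ⊗ f 1 ⊗ ⋯ ⊗ f (n-1) ⊗ 0`; with `f k = A(-(k+1))` this is `y(n, 0)`. -/
def lvec {d : ℕ} (n : ℕ) (f : ℕ → Fin d → Fin d → EReal) : Fin d → EReal :=
  appProd n f (fun _ => 0)

/-- Multiplication of an extended real by `1/n`. -/
def mpScale (n : ℕ) (x : EReal) : EReal := (((n : ℝ)⁻¹ : ℝ) : EReal) * x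

open Classical in
/-- Restriction of a matrix to the indices in `c`: entries outside `c × c` are `-∞`. -/
def mpRestrict {d : ℕ} (c : Set (Fin d)) (M : Fin d → Fin d → EReal) : Fin d → Fin d → EReal :=
  fun i j => if i ∈ c ∧ j ∈ c then M i j else ⊥

/-- Arc relation of the graph `𝒢(A)` of a random matrix `A`:
`(i,j)` is an arc iff `A ω i j ≠ -∞` with positive probability. -/
def arcRel {Ω : Type*} [MeasurableSpace Ω] (μ : Measure Ω) {d : ℕ}
    (A : Ω → Fin d → Fin d → EReal) (i j : Fin d) : Prop :=
  μ {ω | A ω i j ≠ ⊥} ≠ 0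

/-- `c` is a strongly connected component of the graph with arc relation `r`
(the mutual-reachability class of some node; nodes on no circuit are alone in their class). -/
def IsSCC {d : ℕ} (r : Fin d → Fin d → Prop) (c : Set (Fin d)) : Prop :=
  ∃ i, c = {j | Relation.ReflTransGen r i j ∧ Relation.ReflTransGen r j i}

/-- `i → c` : the node `i` reaches the component `c`. -/
def nodeReach {d : ℕ} (r : Fin d → Fin d → Prop) (i : Fin d) (c : Set (Fin d)) : Prop :=
  ∃ j ∈ c, Relation.ReflTransGen r i j

/-- `c → c'` : the component `c` reaches the component `c'`. -/
def sccReach {d : ℕ} (r : Fin d → Fin d → Prop) (c c' : Set (Fin d)) : Prop :=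
  ∃ i ∈ c, nodeReach r i c'

/-- `γ^{[c]} = max { γ^{(c')} : c → c' }`, where `γ` assigns to each s.c.c. its
maximal Lyapunov exponent. -/
def gammaBrack {d : ℕ} (r : Fin d → Fin d → Prop) (γ : Set (Fin d) → EReal)
    (c : Set (Fin d)) : EReal :=
  ⨆ c', ⨆ (_ : IsSCC r c' ∧ sccReach r c c'), γ c'

/-- The set of nodes `H_c = {c}` : nodes `i` with `c → i → c̃` for some s.c.c. `c̃`
realizing `γ^{(c̃)} = γ^{[c]}`. -/
def Hset {d : ℕ} (r : Fin d → Fin d → Prop) (γ : Set (Fin d) → EReal)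
    (c : Set (Fin d)) : Set (Fin d) :=
  {i | ∃ ct, IsSCC r ct ∧ (∃ j ∈ c, Relation.ReflTransGen r j i) ∧ nodeReach r i ct ∧
    γ ct = gammaBrack r γ c}

/-- `max { γ^{(c)} : c s.c.c. with i → c }`. -/
def limFormula {d : ℕ} (r : Fin d → Fin d → Prop) (γ : Set (Fin d) → EReal) (i : Fin d) : EReal :=
  ⨆ c, ⨆ (_ : IsSCC r c ∧ nodeReach r i c), γ c

/-- The sequence `X` is independent and identically distributed under `μ`. -/
structure IsIID {Ω E : Type*} [MeasurableSpace Ω] [MeasurableSpace E] (X : ℕ → Ω → E)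
    (μ : Measure Ω) : Prop where
  meas : ∀ n, Measurable (X n)
  indep : iIndepFun X μ
  ident : ∀ n, μ.map (X n) = μ.map (X 0)

/-- The sequence shifted by `t`. -/
def seqShift {E : Type*} (t : ℕ) (f : ℕ → E) : ℕ → E := fun n => f (n + t)

/-- `F` only depends on the coordinates in `S`. -/
def DependsOnCoords {E β : Type*} (F : (ℕ → E) → β) (S : Set ℕ) : Prop :=
  ∀ f g, (∀ n ∈ S, f n = g n) → F f = F g

theorem measurable_seqShift {E : Type*} [MeasurableSpace E] (t : ℕ) :
    Measurable (seqShift t : (ℕ → E) → ℕ → E) :=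
  measurable_pi_iff.2 fun n => measurable_pi_apply (n + t)

theorem seqShift_seqShift {E : Type*} (s t : ℕ) (f : ℕ → E) :
    seqShift s (seqShift t f) = seqShift (s + t) f := by
  funext n; simp [seqShift, add_assoc]

theorem seqShift_zero {E : Type*} (f : ℕ → E) : seqShift 0 f = f := rfl

namespace IsIID

theorem measurable_of_dependsOnCoords {Ω E : Type*} [MeasurableSpace E] {X : ℕ → Ω → E}
    [Nonempty E] {β : Type*} [MeasurableSpace β]
    {F : (ℕ → E) → β} (hF : Measurable F) {S : Set ℕ} (hS : DependsOnCoords F S) :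
    Measurable[⨆ i ∈ S, MeasurableSpace.comap (X i) inferInstance]
      (fun ω => F (fun n => X n ω)) := by
  classical
  obtain ⟨e⟩ := ‹Nonempty E›
  have : (fun ω => F (fun n => X n ω)) =
      F ∘ (fun ω n => if n ∈ S then X n ω else e) := by
    funext ω
    exact hS _ _ fun n hn => by simp [hn]
  rw [this]
  refine hF.comp (@measurable_pi_lambda _ _ _ (_) _ _ fun n => ?_)
  by_cases hn : n ∈ S
  · simp only [hn, if_true]
    exact Measurable.mono (comap_measurable (X n)) (le_iSup₂_of_le n hn le_rfl) le_rfl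
  · simp only [hn, if_false]
    exact @measurable_const _ _ _ (_) _

variable {Ω E : Type*} [MeasurableSpace Ω] [MeasurableSpace E] {X : ℕ → Ω → E}
  {μ : Measure Ω}

theorem comp (h : IsIID X μ) {E' : Type*} [MeasurableSpace E'] {φ : E → E'}
    (hφ : Measurable φ) : IsIID (fun n ω => φ (X n ω)) μ where
  meas n := hφ.comp (h.meas n)
  indep := h.indep.comp (fun _ => φ) (fun _ => hφ)
  ident n := by
    have := h.ident n
    rw [show (fun ω => φ (X n ω)) = φ ∘ X n from rfl,
      show (fun ω => φ (X 0 ω)) = φ ∘ X 0 from rfl,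
      ← Measure.map_map hφ (h.meas n), ← Measure.map_map hφ (h.meas 0), this]

theorem measurable_seq (h : IsIID X μ) : Measurable (fun ω n => X n ω) :=
  measurable_pi_iff.2 h.meas

theorem map_reindex [IsProbabilityMeasure μ] (h : IsIID X μ) {σ : ℕ → ℕ}
    (hσ : Function.Injective σ) :
    μ.map (fun ω n => X (σ n) ω) = μ.map (fun ω n => X n ω) := by
  rw [iIndepFun.map_fun_eq_infinitePi_map (X := fun n => X (σ n)) (fun n => h.meas _)
    (h.indep.precomp hσ), iIndepFun.map_fun_eq_infinitePi_map h.meas h.indep]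
  congr 1
  funext n
  rw [h.ident (σ n), h.ident n]

theorem identDistrib_reindex [IsProbabilityMeasure μ] (h : IsIID X μ) {σ : ℕ → ℕ}
    (hσ : Function.Injective σ) {β : Type*} [MeasurableSpace β] {F : (ℕ → E) → β}
    (hF : Measurable F) :
    IdentDistrib (fun ω => F (fun n => X (σ n) ω)) (fun ω => F (fun n => X n ω)) μ μ := by
  have : IdentDistrib (fun ω n => X (σ n) ω) (fun ω n => X n ω) μ μ :=
    ⟨(measurable_pi_iff.2 fun n => h.meas _).aemeasurable, h.measurable_seq.aemeasurable,
      h.map_reindex hσ⟩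
  exact this.comp hF

theorem identDistrib_shift [IsProbabilityMeasure μ] (h : IsIID X μ) (t : ℕ) {β : Type*}
    [MeasurableSpace β] {F : (ℕ → E) → β} (hF : Measurable F) :
    IdentDistrib (fun ω => F (seqShift t fun n => X n ω)) (fun ω => F (fun n => X n ω)) μ μ :=
  h.identDistrib_reindex (add_left_injective t) hF

theorem indepFun_of_disjoint [Nonempty E] (h : IsIID X μ) {β β' : Type*} [MeasurableSpace β]
    [MeasurableSpace β'] {F : (ℕ → E) → β} {G : (ℕ → E) → β'} (hF : Measurable F)
    (hG : Measurable G) {S T : Set ℕ} (hFS : DependsOnCoords F S) (hGT : DependsOnCoords G T)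
    (hST : Disjoint S T) :
    IndepFun (fun ω => F (fun n => X n ω)) (fun ω => G (fun n => X n ω)) μ := by
  have := indep_iSup_of_disjoint (fun n => (h.meas n).comap_le) h.indep hST
  exact indep_of_indep_of_le_left (indep_of_indep_of_le_right this
    (measurable_of_dependsOnCoords hG hGT).comap_le)
    (measurable_of_dependsOnCoords hF hFS).comap_le

theorem block_strong_law [Nonempty E] [IsProbabilityMeasure μ] (h : IsIID X μ) (N : ℕ)
    {F : (ℕ → E) → ℝ} (hF : Measurable F) (hN : DependsOnCoords F {n | n < N})
    (hint : Integrable (fun ω => F (fun n => X n ω)) μ) :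
    ∀ᵐ ω ∂μ, Tendsto
      (fun k : ℕ => (∑ l ∈ Finset.range k, F (seqShift (l * N) fun n => X n ω)) / k) atTop
      (𝓝 (∫ ω, F (fun n => X n ω) ∂μ)) := by
  have key := strong_law_ae_real (μ := μ) (fun l ω => F (seqShift (l * N) fun n => X n ω))
    (by simpa [seqShift_zero] using hint) ?_ ?_
  · simpa [seqShift_zero] using key
  · have hdep : ∀ t, DependsOnCoords (fun f => F (seqShift (t * N) f))
        {n | t * N ≤ n ∧ n < (t + 1) * N} := by
      intro t f g hfg
      refine hN _ _ fun n hn => hfg _ ⟨Nat.le_add_left _ _, ?_⟩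
      simp only [Set.mem_ofPred_eq] at hn
      linarith [add_mul t 1 N]
    intro k l hkl
    refine h.indepFun_of_disjoint (F := fun f => F (seqShift (k * N) f))
      (G := fun f => F (seqShift (l * N) f)) (hF.comp (measurable_seqShift _))
      (hF.comp (measurable_seqShift _)) (hdep k) (hdep l) ?_
    rw [Set.disjoint_left]
    rintro n ⟨h1, h2⟩ ⟨h3, h4⟩
    have h5 : k < l + 1 := lt_of_mul_lt_mul_right (h1.trans_lt h4) (Nat.zero_le N)
    have h6 : l < k + 1 := lt_of_mul_lt_mul_right (h3.trans_lt h2) (Nat.zero_le N)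
    exact hkl (by omega)
  · intro l
    exact (h.identDistrib_shift (l * N) hF).trans (h.identDistrib_shift (0 * N) hF).symm

theorem measure_inter_shift [Nonempty E] [IsProbabilityMeasure μ] (h : IsIID X μ) {t : ℕ}
    {B C : Set (ℕ → E)} (hB : MeasurableSet B) (hBt : DependsOnCoords (· ∈ B) {n | n < t})
    (hC : MeasurableSet C) :
    μ {ω | (fun n => X n ω) ∈ B ∧ (seqShift t fun n => X n ω) ∈ C} =
      μ {ω | (fun n => X n ω) ∈ B} * μ {ω | (fun n => X n ω) ∈ C} := by
  have hCt : DependsOnCoords (seqShift t : (ℕ → E) → ℕ → E) {n | t ≤ n} := fun f g hfg =>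
    funext fun n => hfg _ (Nat.le_add_left _ _)
  have hB' : Measurable (fun f : ℕ → E => f ∈ B) := measurable_mem.2 hB
  have hi := h.indepFun_of_disjoint hB' (measurable_seqShift t) hBt hCt
    (Set.disjoint_left.2 fun n h1 h2 => by
      simp only [Set.mem_ofPred_eq] at h1 h2; omega)
  have := hi.measure_inter_preimage_eq_mul {True} C (MeasurableSet.of_discrete) hC
  have h2 : μ {ω | (seqShift t fun n => X n ω) ∈ C} = μ {ω | (fun n => X n ω) ∈ C} :=
    (h.identDistrib_shift t measurable_id).measure_mem_eq hC
  rw [← h2]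
  have h3 : (fun ω => (fun n => X n ω) ∈ B) ⁻¹' {True} = {ω | (fun n => X n ω) ∈ B} := by
    ext ω; simp
  rw [h3] at this
  exact this

theorem measure_eq_zero_of_le [IsProbabilityMeasure μ] (h : IsIID X μ)
    {S : Set (ℕ → E)} (hS : MeasurableSet S) {p : ℝ} (hp : p < 1) (hp0 : 0 ≤ p)
    (hle : ∀ t : ℕ, ∀ B : Set (ℕ → E), MeasurableSet B →
      DependsOnCoords (· ∈ B) {n | n < t} →
      μ.real {ω | (fun n => X n ω) ∈ S ∩ B} ≤ p * μ.real {ω | (fun n => X n ω) ∈ B}) :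
    μ {ω | (fun n => X n ω) ∈ S} = 0 := by
  set P := μ.map (fun ω n => X n ω) with hP
  have : IsProbabilityMeasure P := Measure.isProbabilityMeasure_map h.measurable_seq.aemeasurable
  have hPr : ∀ B, MeasurableSet B → P.real B = μ.real {ω | (fun n => X n ω) ∈ B} := by
    intro B hB
    rw [hP, map_measureReal_apply h.measurable_seq hB]; rfl
  have key : ∀ ε : ℝ, 0 < ε → P.real S ≤ p * P.real S + 2 * ε := by
    intro ε hε
    obtain ⟨B, hB, hBS⟩ := exists_measure_symmDiff_lt_of_generateFrom_isSetRing (μ := P)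
      (isSetRing_measurableCylinders (α := fun _ : ℕ => E))
      ⟨{Set.univ}, Set.countable_singleton _, by
        simpa using univ_mem_measurableCylinders (fun _ : ℕ => E), by simp⟩
      generateFrom_measurableCylinders.symm hS (ENNReal.ofReal_pos.2 hε)
    have hBm : MeasurableSet B := MeasurableSet.of_mem_measurableCylinders hB
    obtain ⟨s, B', -, rfl⟩ := (mem_measurableCylinders _).1 hB
    set B := cylinder (α := fun _ : ℕ => E) s B'
    have hd : P.real (symmDiff B S) < ε := by
      rw [Measure.real, ← ENNReal.toReal_ofReal hε.le]
      exact (ENNReal.toReal_lt_toReal (measure_ne_top _ _) ENNReal.ofReal_ne_top).2 hBS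
    have h1 := hle (s.sup id + 1) B hBm (by
      intro f g hfg
      have : s.restrict f = s.restrict g := by
        funext i
        exact hfg _ (Nat.lt_succ_of_le (Finset.le_sup (f := id) i.2))
      simp only [B, cylinder, Set.mem_preimage, this])
    rw [← hPr _ (hS.inter hBm), ← hPr _ hBm] at h1
    have h2 : P.real S ≤ P.real (S ∩ B) + P.real (symmDiff B S) := by
      refine (measureReal_mono ?_).trans (measureReal_union_le _ _)
      intro x hx
      by_cases hxB : x ∈ B
      · exact Or.inl ⟨hx, hxB⟩
      · exact Or.inr (Or.inr ⟨hx, hxB⟩)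
    have h3 : P.real B ≤ P.real S + P.real (symmDiff B S) := by
      refine (measureReal_mono ?_).trans (measureReal_union_le _ _)
      intro x hx
      by_cases hxS : x ∈ S
      · exact Or.inl hxS
      · exact Or.inr (Or.inl ⟨hx, hxS⟩)
    nlinarith
  have hz : P.real S ≤ 0 := by
    by_contra hpos
    push Not at hpos
    have := key ((1 - p) * P.real S / 4) (by nlinarith [mul_pos (sub_pos.2 hp) hpos])
    nlinarith [mul_pos (sub_pos.2 hp) hpos]
  have hz' : P.real S = 0 := le_antisymm hz measureReal_nonneg
  rw [hPr S hS, measureReal_eq_zero_iff] at hz'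
  exact hz'

end IsIID

open Classical in
/-- The largest absolute value of a finite entry of a max-plus matrix. -/
def mpBound {d : ℕ} (M : Fin d → Fin d → EReal) : ℝ :=
  ⨆ i, ⨆ j, if M i j = ⊥ then (0 : ℝ) else |(M i j).toReal|

/-- The sum of the bounds of the first `n` matrices. -/
def mpBoundSum {d : ℕ} (f : ℕ → Fin d → Fin d → EReal) (n : ℕ) : ℝ :=
  ∑ k ∈ Finset.range n, mpBound (f k)

section Bound

variable {d : ℕ}

theorem mpBound_nonneg (M : Fin d → Fin d → EReal) : 0 ≤ mpBound M :=
  Real.iSup_nonneg fun i => Real.iSup_nonneg fun j => by split_ifs <;> simp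

theorem abs_toReal_le_mpBound {M : Fin d → Fin d → EReal} {i j : Fin d} (h : M i j ≠ ⊥) :
    |(M i j).toReal| ≤ mpBound M := by
  classical
  have h1 : |(M i j).toReal| ≤ ⨆ j, if M i j = ⊥ then (0 : ℝ) else |(M i j).toReal| := by
    have := le_ciSup (f := fun j => if M i j = ⊥ then (0 : ℝ) else |(M i j).toReal|)
      (Set.finite_range _).bddAbove j
    simpa [h] using this
  exact h1.trans (le_ciSup
    (f := fun i => ⨆ j, if M i j = ⊥ then (0 : ℝ) else |(M i j).toReal|)
    (Set.finite_range _).bddAbove i)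

theorem le_mpBound {M : Fin d → Fin d → EReal} {i j : Fin d} (h : M i j ≠ ⊤) :
    M i j ≤ mpBound M := by
  by_cases hb : M i j = ⊥
  · simp [hb]
  · rw [← EReal.coe_toReal h hb, EReal.coe_le_coe_iff]
    exact (le_abs_self _).trans (abs_toReal_le_mpBound hb)

theorem neg_mpBound_le {M : Fin d → Fin d → EReal} {i j : Fin d} (h : M i j ≠ ⊥) :
    ((-mpBound M : ℝ) : EReal) ≤ M i j := by
  by_cases ht : M i j = ⊤
  · simp [ht]
  · rw [← EReal.coe_toReal ht h, EReal.coe_le_coe_iff]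
    exact (neg_le_neg (abs_toReal_le_mpBound h)).trans (neg_abs_le _)

theorem mpBound_mpRestrict_le (c : Set (Fin d)) (M : Fin d → Fin d → EReal) :
    mpBound (mpRestrict c M) ≤ mpBound M := by
  classical
  refine Real.iSup_le (fun i => Real.iSup_le (fun j => ?_) (mpBound_nonneg M)) (mpBound_nonneg M)
  split_ifs with h
  · exact mpBound_nonneg M
  · have : i ∈ c ∧ j ∈ c := by
      by_contra hc
      exact h (by simp [mpRestrict, hc])
    simp only [mpRestrict, this, and_self, if_true] at h ⊢
    exact abs_toReal_le_mpBound h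

theorem measurable_mpBound : Measurable (mpBound : (Fin d → Fin d → EReal) → ℝ) := by
  classical
  refine Measurable.iSup fun i => Measurable.iSup fun j => ?_
  have hm : Measurable fun M : Fin d → Fin d → EReal => M i j :=
    (measurable_pi_apply j).comp (measurable_pi_apply i)
  refine Measurable.ite (hm (measurableSet_singleton ⊥)) measurable_const ?_
  exact hm.ereal_toReal.abs

theorem measurable_mpRestrict (c : Set (Fin d)) :
    Measurable (mpRestrict c : (Fin d → Fin d → EReal) → Fin d → Fin d → EReal) := by
  classical
  refine measurable_pi_iff.2 fun i => measurable_pi_iff.2 fun j => ?_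
  unfold mpRestrict
  split_ifs
  · exact (measurable_pi_apply j).comp (measurable_pi_apply i)
  · exact measurable_const

theorem mpRestrict_ne_top {c : Set (Fin d)} {M : Fin d → Fin d → EReal}
    (h : ∀ i j, M i j ≠ ⊤) (i j : Fin d) : mpRestrict c M i j ≠ ⊤ := by
  unfold mpRestrict
  split_ifs
  · exact h i j
  · simp

theorem mpRestrict_le (c : Set (Fin d)) (M : Fin d → Fin d → EReal) (i j : Fin d) :
    mpRestrict c M i j ≤ M i j := by
  unfold mpRestrict
  split_ifs
  · exact le_rfl
  · exact bot_le

theorem mpRestrict_mono {c c' : Set (Fin d)} (h : c ⊆ c') (M : Fin d → Fin d → EReal)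
    (i j : Fin d) : mpRestrict c M i j ≤ mpRestrict c' M i j := by
  unfold mpRestrict
  split_ifs with h1 h2
  · exact le_rfl
  · exact absurd ⟨h h1.1, h h1.2⟩ h2
  · exact bot_le
  · exact le_rfl

theorem mpRestrict_apply_of_mem {c : Set (Fin d)} {M : Fin d → Fin d → EReal} {i j : Fin d}
    (hi : i ∈ c) (hj : j ∈ c) : mpRestrict c M i j = M i j := by
  simp [mpRestrict, hi, hj]

theorem mem_of_mpRestrict_ne_bot {c : Set (Fin d)} {M : Fin d → Fin d → EReal} {i j : Fin d}
    (h : mpRestrict c M i j ≠ ⊥) : i ∈ c ∧ j ∈ c := by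
  by_contra hc
  exact h (by simp [mpRestrict, hc])

theorem mpBoundSum_succ (f : ℕ → Fin d → Fin d → EReal) (n : ℕ) :
    mpBoundSum f (n + 1) = mpBoundSum f n + mpBound (f n) := Finset.sum_range_succ _ _

theorem mpBoundSum_nonneg (f : ℕ → Fin d → Fin d → EReal) (n : ℕ) : 0 ≤ mpBoundSum f n :=
  Finset.sum_nonneg fun _ _ => mpBound_nonneg _

theorem mpBoundSum_mono (f : ℕ → Fin d → Fin d → EReal) : Monotone (mpBoundSum f) :=
  monotone_nat_of_le_succ fun n => by
    rw [mpBoundSum_succ]; linarith [mpBound_nonneg (f n)]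

theorem mpBoundSum_add (f : ℕ → Fin d → Fin d → EReal) (n m : ℕ) :
    mpBoundSum f (n + m) = mpBoundSum f n + mpBoundSum (seqShift n f) m := by
  simp only [mpBoundSum, Finset.sum_range_add, seqShift, add_comm]

end Bound

section Orbit

variable {d : ℕ} {f g : ℕ → Fin d → Fin d → EReal}

theorem le_mpVec (M : Fin d → Fin d → EReal) (v : Fin d → EReal) (i j : Fin d) :
    M i j + v j ≤ mpVec M v i := le_iSup (fun j => M i j + v j) j

theorem xvec_congr : ∀ {n : ℕ}, (∀ k < n, f k = g k) → xvec f n = xvec g n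
  | 0, _ => rfl
  | n + 1, h => by
    simp only [xvec]
    rw [h n (Nat.lt_succ_self n), xvec_congr fun k hk => h k (Nat.lt_succ_of_lt hk)]

theorem xvec_mono (h : ∀ n i j, f n i j ≤ g n i j) : ∀ n i, xvec f n i ≤ xvec g n i
  | 0, _ => le_rfl
  | n + 1, i => iSup_mono fun j => add_le_add (h n i j) (xvec_mono h n j)

theorem lvec_mono : ∀ (n : ℕ) {f g : ℕ → Fin d → Fin d → EReal},
    (∀ n i j, f n i j ≤ g n i j) → ∀ i, lvec n f i ≤ lvec n g i
  | 0, _, _, _, _ => le_rfl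
  | n + 1, _, _, h, i =>
    iSup_mono fun j => add_le_add (h 0 i j) (lvec_mono n (fun n i j => h (n + 1) i j) j)

theorem lvec_succ (n : ℕ) (f : ℕ → Fin d → Fin d → EReal) (i : Fin d) :
    lvec (n + 1) f i = ⨆ j, f 0 i j + lvec n (seqShift 1 f) j := rfl

theorem add_lvec_le (n : ℕ) (f : ℕ → Fin d → Fin d → EReal) (i j : Fin d) :
    f 0 i j + lvec n (seqShift 1 f) j ≤ lvec (n + 1) f i :=
  le_iSup (fun j => f 0 i j + lvec n (seqShift 1 f) j) j

/-- The involution reversing the order of `0, …, n - 1`. -/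
def natRev (n k : ℕ) : ℕ := if k < n then n - 1 - k else k

theorem natRev_injective (n : ℕ) : Function.Injective (natRev n) := by
  intro a b h
  simp only [natRev] at h
  split_ifs at h <;> omega

theorem lvec_eq_xvec : ∀ (n : ℕ) (f : ℕ → Fin d → Fin d → EReal),
    lvec n f = xvec (fun k => f (natRev n k)) n
  | 0, _ => rfl
  | n + 1, f => by
    have h := lvec_eq_xvec n (seqShift 1 f)
    have h1 : lvec (n + 1) f = mpVec (f 0) (lvec n (seqShift 1 f)) := rfl
    rw [h1, h]
    simp only [xvec]
    congr 1
    · simp [natRev]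
    · refine xvec_congr fun k hk => ?_
      simp only [natRev, seqShift, hk, Nat.lt_succ_of_lt hk, if_true]
      congr 1
      omega

theorem xvec_le_mpBoundSum (hf : ∀ n i j, f n i j ≠ ⊤) :
    ∀ n i, xvec f n i ≤ mpBoundSum f n
  | 0, i => by simp [xvec, mpBoundSum]
  | n + 1, i => by
    refine iSup_le fun j => ?_
    rw [mpBoundSum_succ, EReal.coe_add, add_comm]
    exact add_le_add (xvec_le_mpBoundSum hf n j) (le_mpBound (hf n i j))

theorem neg_mpBoundSum_le_xvec {H : Set (Fin d)}
    (hH : ∀ n, ∀ i ∈ H, ∃ j ∈ H, f n i j ≠ ⊥) :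
    ∀ n, ∀ i ∈ H, ((-mpBoundSum f n : ℝ) : EReal) ≤ xvec f n i
  | 0, i, _ => by simp [xvec, mpBoundSum]
  | n + 1, i, hi => by
    obtain ⟨j, hj, hne⟩ := hH n i hi
    refine le_trans ?_ (le_mpVec (f n) (xvec f n) i j)
    rw [mpBoundSum_succ, neg_add, EReal.coe_add, add_comm]
    exact add_le_add (neg_mpBound_le hne) (neg_mpBoundSum_le_xvec hH n j hj)

theorem xvec_add_le {n : ℕ} {C : EReal} (hC : ∀ j, xvec f n j ≤ C) :
    ∀ m i, xvec f (m + n) i ≤ xvec (seqShift n f) m i + C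
  | 0, i => by simpa [xvec] using hC i
  | m + 1, i => by
    rw [Nat.add_right_comm]
    refine iSup_le fun j => ?_
    refine (add_le_add le_rfl (xvec_add_le hC m j)).trans ?_
    rw [← add_assoc]
    exact add_le_add (le_mpVec (seqShift n f m) _ i j) le_rfl

theorem le_xvec_add {H : Set (Fin d)} (hH : ∀ n i j, f n i j ≠ ⊥ → j ∈ H) {n : ℕ} {C : ℝ}
    (hC : ∀ j ∈ H, (C : EReal) ≤ xvec f n j) :
    ∀ m, ∀ i ∈ H, xvec (seqShift n f) m i + C ≤ xvec f (m + n) i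
  | 0, i, hi => by simpa [xvec] using hC i hi
  | m + 1, i, hi => by
    rw [Nat.add_right_comm]
    rw [← EReal.le_sub_iff_add_le (by simp) (by simp)]
    refine iSup_le fun j => ?_
    rw [EReal.le_sub_iff_add_le (by simp) (by simp)]
    by_cases hj : seqShift n f m i j = ⊥
    · simp [hj]
    · rw [add_assoc]
      exact (add_le_add le_rfl (le_xvec_add hH hC m j (hH _ _ _ hj))).trans
        (le_mpVec (f (m + n)) _ i j)

theorem lvec_add_le : ∀ (k : ℕ) {f : ℕ → Fin d → Fin d → EReal} {m : ℕ} {C : EReal},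
    (∀ j, lvec m (seqShift k f) j ≤ C) → ∀ i, lvec (k + m) f i ≤ lvec k f i + C
  | 0, f, m, C, hC, i => by simpa [lvec, appProd, seqShift_zero] using hC i
  | k + 1, f, m, C, hC, i => by
    rw [Nat.add_right_comm, lvec_succ]
    refine iSup_le fun j => ?_
    refine (add_le_add le_rfl (lvec_add_le k (f := seqShift 1 f) (C := C) ?_ j)).trans ?_
    · intro j
      rw [seqShift_seqShift]
      exact hC j
    · rw [← add_assoc]
      exact add_le_add (add_lvec_le k f i j) le_rfl

theorem measurable_xvec : ∀ (n : ℕ) (i : Fin d),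
    Measurable fun f : ℕ → Fin d → Fin d → EReal => xvec f n i
  | 0, _ => measurable_const
  | n + 1, i => by
    refine Measurable.iSup fun j => ?_
    have h : Measurable fun f : ℕ → Fin d → Fin d → EReal => f n i j := by fun_prop
    exact Measurable.add h (measurable_xvec n j)

theorem measurable_lvec (n : ℕ) (i : Fin d) :
    Measurable fun f : ℕ → Fin d → Fin d → EReal => lvec n f i := by
  simp only [lvec_eq_xvec]
  exact (measurable_xvec n i).comp (measurable_pi_iff.2 fun k => measurable_pi_apply _)

end Orbit

section Scale

theorem mpScale_le_coe_iff {n : ℕ} (hn : 0 < n) (x : EReal) (a : ℝ) :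
    mpScale n x ≤ a ↔ x ≤ ((a * n : ℝ) : EReal) := by
  have hn' : (0 : ℝ) < n := Nat.cast_pos.2 hn
  have hi : (0 : ℝ) < (n : ℝ)⁻¹ := inv_pos.2 hn'
  unfold mpScale
  induction x with
  | bot => simp [EReal.coe_mul_bot_of_pos hi]
  | top =>
    rw [EReal.coe_mul_top_of_pos hi]
    simp only [top_le_iff, EReal.coe_ne_top]
  | coe x =>
    rw [← EReal.coe_mul, EReal.coe_le_coe_iff, EReal.coe_le_coe_iff, inv_mul_le_iff₀ hn', mul_comm]

theorem coe_le_mpScale_iff {n : ℕ} (hn : 0 < n) (x : EReal) (a : ℝ) :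
    (a : EReal) ≤ mpScale n x ↔ ((a * n : ℝ) : EReal) ≤ x := by
  have hn' : (0 : ℝ) < n := Nat.cast_pos.2 hn
  have hi : (0 : ℝ) < (n : ℝ)⁻¹ := inv_pos.2 hn'
  unfold mpScale
  induction x with
  | bot =>
    rw [EReal.coe_mul_bot_of_pos hi]
    simp only [le_bot_iff, EReal.coe_ne_bot]
  | top => simp [EReal.coe_mul_top_of_pos hi]
  | coe x =>
    rw [← EReal.coe_mul, EReal.coe_le_coe_iff, EReal.coe_le_coe_iff, le_inv_mul_iff₀ hn', mul_comm]

theorem eventually_le_of_tendsto_mpScale {x : ℕ → EReal} {l : EReal}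
    (h : Tendsto (fun n => mpScale n (x n)) atTop (𝓝 l)) {a : ℝ} (ha : l < a) :
    ∀ᶠ n : ℕ in atTop, x n ≤ ((a * n : ℝ) : EReal) := by
  filter_upwards [h.eventually_lt_const ha, eventually_gt_atTop 0] with n hn h0
  exact (mpScale_le_coe_iff h0 _ _).1 hn.le

theorem eventually_ge_of_tendsto_mpScale {x : ℕ → EReal} {l : EReal}
    (h : Tendsto (fun n => mpScale n (x n)) atTop (𝓝 l)) {a : ℝ} (ha : (a : EReal) < l) :
    ∀ᶠ n : ℕ in atTop, ((a * n : ℝ) : EReal) ≤ x n := by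
  filter_upwards [h.eventually_const_lt ha, eventually_gt_atTop 0] with n hn h0
  exact (coe_le_mpScale_iff h0 _ _).1 hn.le

theorem tendsto_mpScale {x : ℕ → EReal} {l : EReal}
    (hu : ∀ a : ℝ, l < a → ∀ᶠ n : ℕ in atTop, x n ≤ ((a * n : ℝ) : EReal))
    (hl : ∀ a : ℝ, (a : EReal) < l → ∀ᶠ n : ℕ in atTop, ((a * n : ℝ) : EReal) ≤ x n) :
    Tendsto (fun n => mpScale n (x n)) atTop (𝓝 l) := by
  refine tendsto_order.2 ⟨fun b hb => ?_, fun b hb => ?_⟩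
  · obtain ⟨a, h1, h2⟩ := EReal.lt_iff_exists_real_btwn.1 hb
    filter_upwards [hl a h2, eventually_gt_atTop 0] with n hn h0
    exact h1.trans_le ((coe_le_mpScale_iff h0 _ _).2 hn)
  · obtain ⟨a, h1, h2⟩ := EReal.lt_iff_exists_real_btwn.1 hb
    filter_upwards [hu a h1, eventually_gt_atTop 0] with n hn h0
    exact ((mpScale_le_coe_iff h0 _ _).2 hn).trans_lt h2

end Scale

/-- An i.i.d. sequence of max-plus matrices whose finite entries are integrable. -/
structure IsMPSeq {Ω : Type*} [MeasurableSpace Ω] {d : ℕ} (X : ℕ → Ω → Fin d → Fin d → EReal)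
    (μ : Measure Ω) : Prop where
  iid : IsIID X μ
  ne_top : ∀ n ω i j, X n ω i j ≠ ⊤
  integrable : Integrable (fun ω => mpBound (X 0 ω)) μ

/-- The largest coordinate of `xvec f n`. -/
def mpTop {d : ℕ} (f : ℕ → Fin d → Fin d → EReal) (n : ℕ) : EReal := ⨆ i, xvec f n i

/-- Truncation of an extended real from below at `-K`, as a real number. -/
def mpTrunc (K : ℝ) (x : EReal) : ℝ := (max x ((-K : ℝ) : EReal)).toReal

theorem coe_mpTrunc {K : ℝ} {x : EReal} (hx : x ≠ ⊤) :
    (mpTrunc K x : EReal) = max x ((-K : ℝ) : EReal) := by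
  refine EReal.coe_toReal ?_ ?_
  · exact (max_lt (lt_top_iff_ne_top.2 hx) (EReal.coe_lt_top _)).ne
  · exact ((EReal.bot_lt_coe _).trans_le (le_max_right _ _)).ne'

theorem le_coe_mpTrunc {K : ℝ} {x : EReal} (hx : x ≠ ⊤) : x ≤ mpTrunc K x := by
  rw [coe_mpTrunc hx]; exact le_max_left _ _

theorem mpTrunc_le {K a : ℝ} {x : EReal} (hx : x ≤ a) (hK : -K ≤ a) : mpTrunc K x ≤ a := by
  have : x ≠ ⊤ := (hx.trans_lt (EReal.coe_lt_top a)).ne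
  rw [← EReal.coe_le_coe_iff, coe_mpTrunc this]
  exact max_le hx (EReal.coe_le_coe_iff.2 hK)

theorem neg_le_mpTrunc {K : ℝ} {x : EReal} (hx : x ≠ ⊤) : -K ≤ mpTrunc K x := by
  rw [← EReal.coe_le_coe_iff, coe_mpTrunc hx]
  exact le_max_right _ _

theorem measurable_mpTrunc (K : ℝ) : Measurable (mpTrunc K) :=
  (measurable_id.max measurable_const).ereal_toReal

section

variable {d : ℕ} {f : ℕ → Fin d → Fin d → EReal}

theorem measurable_mpTop (n : ℕ) :
    Measurable fun f : ℕ → Fin d → Fin d → EReal => mpTop f n :=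
  Measurable.iSup fun i => measurable_xvec n i

theorem mpTop_le_mpBoundSum (hf : ∀ n i j, f n i j ≠ ⊤) (n : ℕ) : mpTop f n ≤ mpBoundSum f n :=
  iSup_le fun i => xvec_le_mpBoundSum hf n i

theorem mpTop_ne_top (hf : ∀ n i j, f n i j ≠ ⊤) (n : ℕ) : mpTop f n ≠ ⊤ :=
  ((mpTop_le_mpBoundSum hf n).trans_lt (EReal.coe_lt_top _)).ne

theorem dependsOnCoords_mpTop (n : ℕ) :
    DependsOnCoords (fun f : ℕ → Fin d → Fin d → EReal => mpTop f n) {k | k < n} := by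
  intro f g h
  simp only [mpTop]
  rw [xvec_congr fun k hk => h k hk]

theorem mpTop_mul_le (hf : ∀ n i j, f n i j ≠ ⊤) (N : ℕ) (K : ℝ) (k : ℕ) :
    mpTop f (k * N) ≤
      ((∑ l ∈ Finset.range k, mpTrunc K (mpTop (seqShift (l * N) f) N) : ℝ) : EReal) := by
  induction k with
  | zero => simp [mpTop, xvec]
  | succ k ih =>
    refine iSup_le fun i => ?_
    rw [Nat.succ_mul, add_comm (k * N), Finset.sum_range_succ, EReal.coe_add, add_comm (Real.toEReal _)]
    refine (xvec_add_le (fun j => (le_iSup (fun j => xvec f (k * N) j) j).trans ih) N i).trans ?_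
    refine add_le_add ?_ le_rfl
    exact (le_iSup (fun i => xvec (seqShift (k * N) f) N i) i).trans
      (le_coe_mpTrunc (mpTop_ne_top (fun n i j => hf _ i j) N))

end

namespace IsMPSeq

variable {Ω : Type*} [MeasurableSpace Ω] {μ : Measure Ω} {d : ℕ}
  {X : ℕ → Ω → Fin d → Fin d → EReal}

theorem restrict (h : IsMPSeq X μ) (c : Set (Fin d)) :
    IsMPSeq (fun n ω => mpRestrict c (X n ω)) μ where
  iid := h.iid.comp (measurable_mpRestrict c)
  ne_top n ω := mpRestrict_ne_top (h.ne_top n ω)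
  integrable := by
    refine h.integrable.mono ((measurable_mpBound.comp ((measurable_mpRestrict c).comp
      (h.iid.meas 0))).aestronglyMeasurable) (Eventually.of_forall fun ω => ?_)
    rw [Real.norm_of_nonneg (mpBound_nonneg _), Real.norm_of_nonneg (mpBound_nonneg _)]
    exact mpBound_mpRestrict_le _ _

theorem integrable_mpBound [IsProbabilityMeasure μ] (h : IsMPSeq X μ) (n : ℕ) :
    Integrable (fun ω => mpBound (X n ω)) μ := by
  have hi := h.iid.identDistrib_shift n (measurable_mpBound.comp (measurable_pi_apply 0))
  simpa [seqShift] using hi.integrable_iff.2 h.integrable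

theorem integral_mpBound [IsProbabilityMeasure μ] (h : IsMPSeq X μ) (n : ℕ) :
    ∫ ω, mpBound (X n ω) ∂μ = ∫ ω, mpBound (X 0 ω) ∂μ := by
  have hi := h.iid.identDistrib_shift n (measurable_mpBound.comp (measurable_pi_apply 0))
  simpa [seqShift] using hi.integral_eq

theorem integrable_mpBoundSum [IsProbabilityMeasure μ] (h : IsMPSeq X μ) (n : ℕ) :
    Integrable (fun ω => mpBoundSum (fun k => X k ω) n) μ :=
  integrable_finsetSum _ fun k _ => h.integrable_mpBound k

theorem integral_mpBoundSum [IsProbabilityMeasure μ] (h : IsMPSeq X μ) (n : ℕ) :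
    ∫ ω, mpBoundSum (fun k => X k ω) n ∂μ = n * ∫ ω, mpBound (X 0 ω) ∂μ := by
  simp only [mpBoundSum]
  rw [integral_finsetSum _ fun k _ => h.integrable_mpBound k]
  simp [h.integral_mpBound]

theorem tendsto_mpBoundSum [IsProbabilityMeasure μ] (h : IsMPSeq X μ) :
    ∀ᵐ ω ∂μ, Tendsto (fun n : ℕ => mpBoundSum (fun k => X k ω) n / n) atTop
      (𝓝 (∫ ω, mpBound (X 0 ω) ∂μ)) := by
  have := h.iid.block_strong_law 1 (F := fun f => mpBound (f 0))
    (measurable_mpBound.comp (measurable_pi_apply 0))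
    (fun f g hfg => by simp only; rw [hfg 0 (by simp)]) h.integrable
  simpa [seqShift, mpBoundSum] using this

theorem integrable_of_abs_le [IsProbabilityMeasure μ] (h : IsMPSeq X μ) {F : Ω → ℝ}
    (hF : AEStronglyMeasurable F μ) (n : ℕ) (K : ℝ)
    (hle : ∀ᵐ ω ∂μ, |F ω| ≤ mpBoundSum (fun k => X k ω) n + K) : Integrable F μ := by
  refine ((h.integrable_mpBoundSum n).add (integrable_const K)).mono' hF ?_
  filter_upwards [hle] with ω hω
  simpa using hω

theorem integrable_mpTrunc_mpTop [IsProbabilityMeasure μ] (h : IsMPSeq X μ) (n : ℕ) {K : ℝ}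
    (hK : 0 ≤ K) : Integrable (fun ω => mpTrunc K (mpTop (fun k => X k ω) n)) μ := by
  refine h.integrable_of_abs_le (((measurable_mpTrunc K).comp ((measurable_mpTop n).comp
    h.iid.measurable_seq)).aestronglyMeasurable) n K (Eventually.of_forall fun ω => ?_)
  have h0 := mpBoundSum_nonneg (fun k => X k ω) n
  have hf : ∀ n i j, X n ω i j ≠ ⊤ := fun n => h.ne_top n ω
  rw [abs_le]
  constructor
  · linarith [neg_le_mpTrunc (K := K) (mpTop_ne_top (f := fun k => X k ω) hf n)]
  · have := mpTrunc_le (mpTop_le_mpBoundSum (f := fun k => X k ω) hf n)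
      (show -K ≤ _ by linarith)
    linarith

/-- A Fatou-type bound for sequences bounded below by the sums of the entry bounds. -/
theorem exists_le_integral [IsProbabilityMeasure μ] (h : IsMPSeq X μ) {Z : ℕ → Ω → ℝ}
    (hZ : ∀ n, Integrable (Z n) μ)
    (hlow : ∀ n, ∀ᵐ ω ∂μ, -mpBoundSum (fun k => X k ω) n ≤ Z n ω) {b : ℝ}
    (hb : ∀ᵐ ω ∂μ, ∀ᶠ n : ℕ in atTop, b * n ≤ Z n ω) {ε : ℝ} (hε : 0 < ε) :
    ∃ N : ℕ, 0 < N ∧ (b - ε) * N ≤ ∫ ω, Z N ω ∂μ := by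
  by_contra hcon
  push Not at hcon
  set m := ∫ ω, mpBound (X 0 ω) ∂μ
  set u : ℕ → Ω → ℝ := fun n ω => (Z n ω + mpBoundSum (fun k => X k ω) n) / n with hu
  have hui : ∀ n, Integrable (u n) μ := fun n =>
    ((hZ n).add (h.integrable_mpBoundSum n)).div_const _
  have hu0 : ∀ n, 0 ≤ᵐ[μ] u n := by
    intro n
    filter_upwards [hlow n] with ω hω
    exact div_nonneg (by linarith) (Nat.cast_nonneg n)
  have huE : ∀ n : ℕ, 0 < n → ∫ ω, u n ω ∂μ ≤ b - ε + m := by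
    intro n hn
    have hn' : (0 : ℝ) < n := Nat.cast_pos.2 hn
    simp only [hu]
    rw [integral_div, integral_add (hZ n) (h.integrable_mpBoundSum n), h.integral_mpBoundSum,
      div_le_iff₀ hn']
    have := hcon n hn
    nlinarith
  have hpos : 0 ≤ b - ε + m := (integral_nonneg_of_ae (hu0 1)).trans (huE 1 one_pos)
  have hlim : ∀ᵐ ω ∂μ, ENNReal.ofReal (b + m - ε / 2) ≤
      liminf (fun n => ENNReal.ofReal (u n ω)) atTop := by
    filter_upwards [hb, h.tendsto_mpBoundSum] with ω h1 h2
    refine le_liminf_of_le (by isBoundedDefault) ?_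
    filter_upwards [h1, h2.eventually_const_lt (show m - ε / 2 < m by linarith),
      eventually_gt_atTop 0] with n h3 h4 h5
    have hn' : (0 : ℝ) < n := Nat.cast_pos.2 h5
    refine ENNReal.ofReal_le_ofReal ?_
    simp only [hu]
    rw [add_div]
    have : b ≤ Z n ω / n := (le_div_iff₀ hn').2 h3
    linarith
  have hF := lintegral_liminf_le' (μ := μ) (u := atTop) (f := fun n ω => ENNReal.ofReal (u n ω))
    (fun n => (hui n).1.aemeasurable.ennreal_ofReal)
  have h1 : ENNReal.ofReal (b + m - ε / 2) ≤
      ∫⁻ ω, liminf (fun n => ENNReal.ofReal (u n ω)) atTop ∂μ := by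
    calc ENNReal.ofReal (b + m - ε / 2) = ∫⁻ _, ENNReal.ofReal (b + m - ε / 2) ∂μ := by simp
      _ ≤ _ := lintegral_mono_ae hlim
  have h2 : liminf (fun n => ∫⁻ ω, ENNReal.ofReal (u n ω) ∂μ) atTop ≤
      ENNReal.ofReal (b - ε + m) := by
    refine liminf_le_of_frequently_le' (Eventually.frequently ?_)
    filter_upwards [eventually_gt_atTop 0] with n hn
    rw [← ofReal_integral_eq_lintegral_ofReal (hui n) (hu0 n)]
    exact ENNReal.ofReal_le_ofReal (huE n hn)
  have h3 := (ENNReal.ofReal_le_ofReal_iff hpos).1 ((h1.trans hF).trans h2)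
  linarith

theorem exponent_le [IsProbabilityMeasure μ] (h : IsMPSeq X μ) {Γ : EReal}
    (hΓ : ∀ᵐ ω ∂μ, Tendsto (fun n => mpScale n (mpTop (fun k => X k ω) n)) atTop (𝓝 Γ))
    {N : ℕ} (hN : 0 < N) {K : ℝ} (hK : 0 ≤ K) :
    Γ ≤ (((∫ ω, mpTrunc K (mpTop (fun k => X k ω) N) ∂μ) / N : ℝ) : EReal) := by
  have hlaw := h.iid.block_strong_law N (F := fun f => mpTrunc K (mpTop f N))
    ((measurable_mpTrunc K).comp (measurable_mpTop N))
    (fun f g hfg => congrArg (mpTrunc K) (dependsOnCoords_mpTop N f g hfg))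
    (h.integrable_mpTrunc_mpTop N hK)
  obtain ⟨ω, h1, h2⟩ := (hΓ.and hlaw).exists
  by_contra hcon
  push Not at hcon
  obtain ⟨a, ha1, ha2⟩ := EReal.lt_iff_exists_real_btwn.1 hcon
  have hN' : (0 : ℝ) < N := Nat.cast_pos.2 hN
  rw [EReal.coe_lt_coe_iff, div_lt_iff₀ hN'] at ha1
  have h3 := (tendsto_id.atTop_mul_const' hN).eventually
    (eventually_ge_of_tendsto_mpScale h1 ha2)
  refine absurd (ge_of_tendsto h2 ?_) (not_le.2 ha1)
  filter_upwards [h3, eventually_gt_atTop 0] with k hk hk0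
  have hk' : (0 : ℝ) < k := Nat.cast_pos.2 hk0
  have h4 := hk.trans (mpTop_mul_le (fun n => h.ne_top n ω) N K k)
  rw [EReal.coe_le_coe_iff] at h4
  rw [le_div_iff₀ hk']
  simp only [id, Nat.cast_mul] at h4
  linarith

theorem exists_integral_mpTrunc_le [IsProbabilityMeasure μ] (h : IsMPSeq X μ) {Γ : EReal}
    (hΓ : ∀ᵐ ω ∂μ, Tendsto (fun n => mpScale n (mpTop (fun k => X k ω) n)) atTop (𝓝 Γ))
    {a : ℝ} (ha : Γ < a) :
    ∃ N : ℕ, 0 < N ∧ ∃ K : ℝ, 0 ≤ K ∧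
      ∫ ω, mpTrunc K (mpTop (fun k => X k ω) N) ∂μ ≤ a * N := by
  obtain ⟨a', ha1, ha2⟩ := EReal.lt_iff_exists_real_btwn.1 ha
  rw [EReal.coe_lt_coe_iff] at ha2
  obtain ⟨N, hN, hle⟩ := h.exists_le_integral
    (Z := fun n ω => -mpTrunc (|a'| * n) (mpTop (fun k => X k ω) n)) (b := -a')
    (ε := a - a')
    (fun n => (h.integrable_mpTrunc_mpTop n (by positivity)).neg)
    (fun n => Eventually.of_forall fun ω => by
      rw [neg_le_neg_iff]
      refine mpTrunc_le (mpTop_le_mpBoundSum (fun n => h.ne_top n ω) n) ?_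
      have : 0 ≤ |a'| * n := by positivity
      linarith [mpBoundSum_nonneg (fun k => X k ω) n])
    (by
      filter_upwards [hΓ] with ω hω
      filter_upwards [eventually_le_of_tendsto_mpScale hω ha1] with n hn
      rw [neg_mul, neg_le_neg_iff]
      refine mpTrunc_le hn ?_
      have : (0 : ℝ) ≤ n := Nat.cast_nonneg n
      nlinarith [neg_abs_le a']) (by linarith)
  refine ⟨N, hN, |a'| * N, by positivity, ?_⟩
  rw [integral_neg] at hle
  linarith

end IsMPSeq

section

variable {d : ℕ} {f : ℕ → Fin d → Fin d → EReal}

/-- The largest coordinate of `lvec n f`. -/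
def mpLTop {d : ℕ} (n : ℕ) (f : ℕ → Fin d → Fin d → EReal) : EReal := ⨆ i, lvec n f i

theorem mpLTop_eq_mpTop (n : ℕ) (f : ℕ → Fin d → Fin d → EReal) :
    mpLTop n f = mpTop (fun k => f (natRev n k)) n := by
  simp only [mpLTop, mpTop, lvec_eq_xvec]

theorem measurable_mpLTop (n : ℕ) :
    Measurable fun f : ℕ → Fin d → Fin d → EReal => mpLTop n f :=
  Measurable.iSup fun i => measurable_lvec n i

theorem mpLTop_ne_top (hf : ∀ n i j, f n i j ≠ ⊤) (n : ℕ) : mpLTop n f ≠ ⊤ := by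
  rw [mpLTop_eq_mpTop]
  exact mpTop_ne_top (fun k => hf _) n

theorem mpLTop_succ_le (hf : ∀ n i j, f n i j ≠ ⊤) (n : ℕ) :
    mpLTop (n + 1) f ≤ mpBound (f 0) + mpLTop n (seqShift 1 f) := by
  refine iSup_le fun i => ?_
  rw [lvec_succ]
  exact iSup_le fun j => add_le_add (le_mpBound (hf 0 i j))
    (le_iSup (fun j => lvec n (seqShift 1 f) j) j)

theorem neg_mpBoundSum_le_of_ne_bot : ∀ {n : ℕ} {i : Fin d}, xvec f n i ≠ ⊥ →
    ((-mpBoundSum f n : ℝ) : EReal) ≤ xvec f n i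
  | 0, i, _ => by simp [xvec, mpBoundSum]
  | n + 1, i, h => by
    obtain ⟨j, hj⟩ : ∃ j, f n i j + xvec f n j ≠ ⊥ := by
      by_contra! hcon
      exact h (by simp only [xvec, mpVec, hcon, iSup_bot])
    rw [Ne, EReal.add_eq_bot_iff, not_or] at hj
    refine le_trans ?_ (le_mpVec (f n) (xvec f n) i j)
    rw [mpBoundSum_succ, neg_add, EReal.coe_add, add_comm]
    exact add_le_add (neg_mpBound_le hj.1) (neg_mpBoundSum_le_of_ne_bot hj.2)

theorem neg_mpBoundSum_le_mpTop {n : ℕ} (h : mpTop f n ≠ ⊥) :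
    ((-mpBoundSum f n : ℝ) : EReal) ≤ mpTop f n := by
  obtain ⟨i, hi⟩ : ∃ i, xvec f n i ≠ ⊥ := by
    by_contra! hcon
    exact h (by simp only [mpTop, hcon, iSup_bot])
  exact (neg_mpBoundSum_le_of_ne_bot hi).trans (le_iSup (fun i => xvec f n i) i)

theorem abs_toReal_mpTop_le (hf : ∀ n i j, f n i j ≠ ⊤) (n : ℕ) :
    |(mpTop f n).toReal| ≤ mpBoundSum f n := by
  by_cases h : mpTop f n = ⊥
  · simp [h, mpBoundSum_nonneg]
  · rw [abs_le]
    have h1 := neg_mpBoundSum_le_mpTop h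
    have h2 := mpTop_le_mpBoundSum hf n
    rw [← EReal.coe_toReal (mpTop_ne_top hf n) h, EReal.coe_le_coe_iff] at h1 h2
    exact ⟨h1, h2⟩

theorem mpTop_succ_eq_bot {n : ℕ} (h : mpTop f n = ⊥) : mpTop f (n + 1) = ⊥ := by
  refine le_bot_iff.1 (iSup_le fun i => ?_)
  have := xvec_add_le (f := f) (n := n) (C := ⊥)
    (fun j => (le_iSup (fun j => xvec f n j) j).trans_eq h) 1 i
  rw [add_comm]
  simpa using this

theorem mpTop_eq_bot_of_le {n m : ℕ} (h : mpTop f n = ⊥) (hnm : n ≤ m) : mpTop f m = ⊥ := by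
  induction m, hnm using Nat.le_induction with
  | base => exact h
  | succ m _ ih => exact mpTop_succ_eq_bot ih

end

section Leader

/-- The value `a n f` dominates the values `a (n - k)` of the shifted sequences, with slope `c`. -/
def IsLeader {E : Type*} (a : ℕ → (ℕ → E) → ℝ) (c : ℝ) (n : ℕ) (f : ℕ → E) : Prop :=
  ∀ k ≤ n, a (n - k) (seqShift k f) + c * k ≤ a n f

open Classical in
/-- The telescoping estimate over leaders: if `a` is subadditive along the shift, then
`a n f` exceeds `c * n` by at most the sum of the increments at the leaders. -/
theorem le_add_sum_leaders {E : Type*} {a : ℕ → (ℕ → E) → ℝ} {b : E → ℝ} {c : ℝ}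
    (ha0 : ∀ f, a 0 f = 0) (hb : ∀ x, 0 ≤ b x) : ∀ (n : ℕ) (f : ℕ → E),
    (∀ t m, a (m + 1) (seqShift t f) ≤ b (f t) + a m (seqShift (t + 1) f)) →
    ∀ k ≤ n, a (n - k) (seqShift k f) + c * k ≤ c * n + ∑ l ∈ Finset.range n,
      if IsLeader a c (n - l) (seqShift l f) then b (f l) + |c| else 0
  | 0, f, _, k, hk => by
    obtain rfl : k = 0 := by omega
    simp [ha0]
  | n + 1, f, h, k, hk => by
    have ih := le_add_sum_leaders (c := c) ha0 hb n (seqShift 1 f) (fun t m => by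
      have := h (t + 1) m
      simpa only [seqShift_seqShift, seqShift] using this)
    rw [Finset.sum_range_succ']
    have hsum : (∑ l ∈ Finset.range n, if IsLeader a c (n + 1 - (l + 1)) (seqShift (l + 1) f)
          then b (f (l + 1)) + |c| else 0) =
        ∑ l ∈ Finset.range n, if IsLeader a c (n - l) (seqShift l (seqShift 1 f))
          then b (seqShift 1 f l) + |c| else 0 := by
      refine Finset.sum_congr rfl fun l _ => ?_
      rw [seqShift_seqShift l 1 f, Nat.add_sub_add_right]
      rfl
    rw [hsum]
    set S := ∑ l ∈ Finset.range n, if IsLeader a c (n - l) (seqShift l (seqShift 1 f))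
          then b (seqShift 1 f l) + |c| else 0
    rw [Nat.sub_zero, seqShift_zero]
    have hlater : ∀ k ≤ n, a (n + 1 - (k + 1)) (seqShift (k + 1) f) + c * ((k + 1 : ℕ) : ℝ) ≤
        c * ((n + 1 : ℕ) : ℝ) + S := by
      intro k hk
      have := ih k hk
      rw [seqShift_seqShift] at this
      rw [Nat.add_sub_add_right]
      push_cast
      linarith
    have hnn : 0 ≤ (if IsLeader a c (n + 1) f then b (f 0) + |c| else 0) := by
      split_ifs
      · have := hb (f 0)
        positivity
      · exact le_rfl
    rcases k with _ | k
    · simp only [Nat.sub_zero, seqShift_zero, Nat.cast_zero, mul_zero, add_zero]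
      by_cases hg : IsLeader a c (n + 1) f
      · rw [if_pos hg]
        have h1 := ih 0 (Nat.zero_le _)
        have h2 := h 0 n
        simp only [seqShift_zero, zero_add, Nat.sub_zero, Nat.cast_zero, mul_zero, add_zero]
          at h1 h2
        push_cast
        linarith [neg_abs_le c, h1]
      · rw [if_neg hg]
        simp only [IsLeader] at hg
        push Not at hg
        obtain ⟨k, hk, hlt⟩ := hg
        rcases k with _ | k
        · simp [seqShift_zero] at hlt
        · linarith [hlater k (by omega)]
    · linarith [hlater k (by omega)]

end Leader

namespace IsMPSeq

variable {Ω : Type*} [MeasurableSpace Ω] {μ : Measure Ω} {d : ℕ}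
  {X : ℕ → Ω → Fin d → Fin d → EReal}

theorem ae_mpTop_ne_bot {g : ℝ}
    (hΓ : ∀ᵐ ω ∂μ, Tendsto (fun n => mpScale n (mpTop (fun k => X k ω) n)) atTop (𝓝 (g : EReal))) :
    ∀ᵐ ω ∂μ, ∀ n, mpTop (fun k => X k ω) n ≠ ⊥ := by
  filter_upwards [hΓ] with ω hω n hn
  have h1 := eventually_ge_of_tendsto_mpScale hω (a := g - 1)
    (EReal.coe_lt_coe_iff.2 (by linarith))
  obtain ⟨m, hm, hnm⟩ := (h1.and (eventually_ge_atTop n)).exists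
  rw [mpTop_eq_bot_of_le hn hnm] at hm
  exact absurd hm (not_le.2 (EReal.bot_lt_coe _))

variable [IsProbabilityMeasure μ]

theorem identDistrib_mpLTop (h : IsMPSeq X μ) (n t : ℕ) :
    IdentDistrib (fun ω => mpLTop n (seqShift t fun k => X k ω))
      (fun ω => mpTop (fun k => X k ω) n) μ μ := by
  refine (h.iid.identDistrib_shift t (measurable_mpLTop n)).trans ?_
  simp only [mpLTop_eq_mpTop]
  exact h.iid.identDistrib_reindex (natRev_injective n) (measurable_mpTop n)

theorem integrable_toReal_mpTop (h : IsMPSeq X μ) (n : ℕ) :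
    Integrable (fun ω => (mpTop (fun k => X k ω) n).toReal) μ :=
  h.integrable_of_abs_le (((measurable_mpTop n).comp
    h.iid.measurable_seq).ereal_toReal.aestronglyMeasurable) n 0
    (Eventually.of_forall fun ω => by
      simpa using abs_toReal_mpTop_le (fun n => h.ne_top n ω) n)

theorem mul_le_integral_toReal_mpTop (h : IsMPSeq X μ) {g : ℝ}
    (hΓ : ∀ᵐ ω ∂μ, Tendsto (fun n => mpScale n (mpTop (fun k => X k ω) n)) atTop (𝓝 (g : EReal)))
    (n : ℕ) : g * n ≤ ∫ ω, (mpTop (fun k => X k ω) n).toReal ∂μ := by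
  rcases Nat.eq_zero_or_pos n with rfl | hn
  · obtain ⟨ω, hω⟩ := (ae_mpTop_ne_bot hΓ).exists
    have : Nonempty (Fin d) := by
      by_contra hcon
      rw [not_nonempty_iff] at hcon
      exact hω 0 (by simp [mpTop])
    simp [mpTop, xvec]
  have hn' : (0 : ℝ) < n := Nat.cast_pos.2 hn
  have hlim : Tendsto (fun K : ℕ => ∫ ω, mpTrunc K (mpTop (fun k => X k ω) n) ∂μ) atTop
      (𝓝 (∫ ω, (mpTop (fun k => X k ω) n).toReal ∂μ)) := by
    refine tendsto_integral_of_dominated_convergence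
      (fun ω => mpBoundSum (fun k => X k ω) n) ?_ (h.integrable_mpBoundSum n) ?_ ?_
    · exact fun K => (h.integrable_mpTrunc_mpTop n (Nat.cast_nonneg K)).1
    · intro K
      filter_upwards [ae_mpTop_ne_bot hΓ] with ω hω
      have hf : ∀ n i j, X n ω i j ≠ ⊤ := fun n => h.ne_top n ω
      have hK : (0 : ℝ) ≤ K := Nat.cast_nonneg K
      have h0 := mpBoundSum_nonneg (fun k => X k ω) n
      rw [Real.norm_eq_abs, abs_le]
      constructor
      · rw [← EReal.coe_le_coe_iff]
        exact (neg_mpBoundSum_le_mpTop (hω n)).trans (le_coe_mpTrunc (mpTop_ne_top hf n))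
      · exact mpTrunc_le (mpTop_le_mpBoundSum hf n) (by linarith)
    · filter_upwards [ae_mpTop_ne_bot hΓ] with ω hω
      have hf : ∀ n i j, X n ω i j ≠ ⊤ := fun n => h.ne_top n ω
      refine tendsto_const_nhds.congr' ?_
      filter_upwards [eventually_ge_atTop ⌈-(mpTop (fun k => X k ω) n).toReal⌉₊] with K hK
      have hK' := (Nat.le_ceil _).trans (Nat.cast_le (α := ℝ).2 hK)
      rw [mpTrunc, max_eq_left]
      rw [← EReal.coe_toReal (mpTop_ne_top (f := fun k => X k ω) hf n) (hω n),
        EReal.coe_le_coe_iff]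
      linarith
  refine ge_of_tendsto' hlim fun K => ?_
  have := h.exponent_le hΓ hn (Nat.cast_nonneg K)
  rwa [EReal.coe_le_coe_iff, le_div_iff₀ hn'] at this

/-- With positive probability, some row of the backward products grows at a rate arbitrarily
close to the maximal Lyapunov exponent at all times. -/
theorem exists_measure_lvec_pos (h : IsMPSeq X μ) {g : ℝ}
    (hΓ : ∀ᵐ ω ∂μ, Tendsto (fun n => mpScale n (mpTop (fun k => X k ω) n)) atTop (𝓝 (g : EReal)))
    {ε : ℝ} (hε : 0 < ε) :
    ∃ j, μ {ω | ∀ k : ℕ, (((g - ε) * k : ℝ) : EReal) ≤ lvec k (fun n => X n ω) j} ≠ 0 := by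
  classical
  set c := g - ε with hc
  set a : ℕ → (ℕ → Fin d → Fin d → EReal) → ℝ := fun n f => (mpLTop n f).toReal with ha
  set good : ℕ → (ℕ → Fin d → Fin d → EReal) → Prop := IsLeader a c with hgood
  set e : ℕ → (ℕ → Fin d → Fin d → EReal) → ℝ := fun n f =>
    if good n f then mpBound (f 0) + |c| else 0 with he
  have hne : Nonempty (Fin d) := by
    obtain ⟨ω, hω⟩ := (ae_mpTop_ne_bot hΓ).exists
    by_contra hcon
    rw [not_nonempty_iff] at hcon
    exact hω 0 (by simp [mpTop])
  have hbot : ∀ᵐ ω ∂μ, ∀ t m, mpLTop m (seqShift t fun n => X n ω) ≠ ⊥ := by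
    refine ae_all_iff.2 fun t => ae_all_iff.2 fun m => ?_
    refine (h.identDistrib_mpLTop m t).symm.ae_snd (p := fun x => x ≠ ⊥)
      (measurableSet_singleton _).compl ?_
    filter_upwards [ae_mpTop_ne_bot hΓ] with ω hω using hω m
  have ham : ∀ n, Measurable (a n) := fun n => (measurable_mpLTop n).ereal_toReal
  have hgm : ∀ n, MeasurableSet {f | good n f} := by
    intro n
    have : {f | good n f} = ⋂ k, ⋂ (_ : k ≤ n),
        {f | a (n - k) (seqShift k f) + c * k ≤ a n f} := by
      ext f; simp [hgood, IsLeader]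
    rw [this]
    exact MeasurableSet.iInter fun k => MeasurableSet.iInter fun _ =>
      measurableSet_le (((ham _).comp (measurable_seqShift k)).add_const _) (ham n)
  have hem : ∀ n, Measurable (e n) := fun n =>
    Measurable.ite (hgm n) ((measurable_mpBound.comp (measurable_pi_apply 0)).add_const _)
      measurable_const
  have hdom : Integrable (fun ω => mpBound (X 0 ω) + |c|) μ :=
    h.integrable.add (integrable_const _)
  have hebd : ∀ n ω, ‖e n (fun k => X k ω)‖ ≤ mpBound (X 0 ω) + |c| := by
    intro n ω
    have hnn : 0 ≤ mpBound (X 0 ω) + |c| := add_nonneg (mpBound_nonneg _) (abs_nonneg _)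
    simp only [he]
    split_ifs
    · rw [Real.norm_of_nonneg hnn]
    · simpa using hnn
  have hei : ∀ n, Integrable (fun ω => e n (fun k => X k ω)) μ := fun n =>
    hdom.mono' ((hem n).comp h.iid.measurable_seq).aestronglyMeasurable
      (Eventually.of_forall (hebd n))
  have hpt : ∀ n, ∀ᵐ ω ∂μ, a n (fun k => X k ω) ≤
      c * n + ∑ l ∈ Finset.range n, e (n - l) (seqShift l fun k => X k ω) := by
    intro n
    filter_upwards [hbot] with ω hω
    have := le_add_sum_leaders (a := a) (b := mpBound) (c := c)
      (fun f => by simp [ha, mpLTop, lvec, appProd]) mpBound_nonneg n (fun k => X k ω) ?_ 0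
      (Nat.zero_le _)
    · simpa [seqShift_zero, he, hgood, seqShift] using this
    · intro t m
      have hf : ∀ t n i j, (seqShift t fun k => X k ω) n i j ≠ ⊤ := fun t n => h.ne_top _ ω
      have h1 := mpLTop_succ_le (hf t) m
      rw [seqShift_seqShift, ← EReal.coe_toReal (mpLTop_ne_top (hf t) (m + 1)) (hω t (m + 1)),
        ← EReal.coe_toReal (mpLTop_ne_top (hf (1 + t)) m) (hω (1 + t) m), ← EReal.coe_add,
        EReal.coe_le_coe_iff] at h1
      rw [add_comm t 1]
      simpa [seqShift] using h1
  have hsum : ∀ n : ℕ, ε * n ≤ ∑ m ∈ Finset.range n, ∫ ω, e (m + 1) (fun k => X k ω) ∂μ := by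
    intro n
    have hai : Integrable (fun ω => a n (fun k => X k ω)) μ := by
      have := ((h.identDistrib_mpLTop n 0).comp measurable_ereal_toReal).integrable_iff
      exact this.2 (h.integrable_toReal_mpTop n)
    have haE : g * n ≤ ∫ ω, a n (fun k => X k ω) ∂μ := by
      have := ((h.identDistrib_mpLTop n 0).comp measurable_ereal_toReal).integral_eq
      refine (h.mul_le_integral_toReal_mpTop hΓ n).trans_eq ?_
      exact this.symm
    have hes : ∀ l m, Integrable (fun ω => e m (seqShift l fun k => X k ω)) μ := fun l m =>
      (h.iid.identDistrib_shift l (hem m)).integrable_iff.2 (hei m)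
    have h1 := integral_mono_ae hai ((integrable_const (c * n)).add
      (integrable_finsetSum (Finset.range n) fun l _ => hes l (n - l))) (hpt n)
    rw [integral_add' (integrable_const _) (integrable_finsetSum _ fun l _ => hes l (n - l)),
      integral_finsetSum _ fun l _ => hes l (n - l)] at h1
    have h2 : ∑ l ∈ Finset.range n, ∫ ω, e (n - l) (seqShift l fun k => X k ω) ∂μ =
        ∑ m ∈ Finset.range n, ∫ ω, e (m + 1) (fun k => X k ω) ∂μ := by
      rw [← Finset.sum_range_reflect]
      refine Finset.sum_congr rfl fun l hl => ?_
      rw [Finset.mem_range] at hl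
      rw [(h.iid.identDistrib_shift _ (hem _)).integral_eq]
      rw [show n - (n - 1 - l) = l + 1 by omega]
    rw [h2] at h1
    simp only [integral_const, probReal_univ, one_smul] at h1
    nlinarith
  have hfreq : ¬ ∀ᵐ ω ∂μ, ∀ᶠ m in atTop, ¬ good m (fun k => X k ω) := by
    intro hcon
    have hlim : Tendsto (fun m => ∫ ω, e (m + 1) (fun k => X k ω) ∂μ) atTop (𝓝 0) := by
      have := tendsto_integral_of_dominated_convergence (μ := μ)
        (F := fun m ω => e (m + 1) (fun k => X k ω)) (f := fun _ => 0) _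
        (fun m => (hei (m + 1)).1) hdom (fun m => Eventually.of_forall (hebd (m + 1))) ?_
      · simpa using this
      · filter_upwards [hcon] with ω hω
        refine tendsto_const_nhds.congr' ?_
        filter_upwards [(tendsto_add_atTop_nat 1).eventually hω] with m hm
        simp only [he, if_neg hm]
    have h1 := hlim.cesaro
    obtain ⟨n, hn, hn0⟩ := ((h1.eventually_lt_const hε).and (eventually_gt_atTop 0)).exists
    have hn' : (0 : ℝ) < n := Nat.cast_pos.2 hn0
    have h2 := hsum n
    rw [inv_mul_lt_iff₀ hn'] at hn
    linarith
  by_contra! hcon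
  refine hfreq ?_
  have hall : ∀ᵐ ω ∂μ, ∀ j, ¬ ∀ k : ℕ, ((c * k : ℝ) : EReal) ≤ lvec k (fun n => X n ω) j := by
    refine ae_all_iff.2 fun j => ?_
    rw [ae_iff]
    simpa using hcon j
  filter_upwards [hall, hbot] with ω h1 h2
  by_contra hinf
  have hinf' : ∃ᶠ m in atTop, good m (fun k => X k ω) := hinf
  have h3 : ∃ᶠ m in atTop, ∃ j, good m (fun k => X k ω) ∧
      lvec m (fun k => X k ω) j = mpLTop m (fun k => X k ω) :=
    hinf'.mono fun m hm => by
      obtain ⟨j, hj⟩ := exists_eq_ciSup_of_finite (f := fun j => lvec m (fun k => X k ω) j)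
      exact ⟨j, hm, hj⟩
  obtain ⟨j, hj⟩ : ∃ j, ∃ᶠ m in atTop, good m (fun k => X k ω) ∧
      lvec m (fun k => X k ω) j = mpLTop m (fun k => X k ω) := by
    by_contra hno
    rw [not_exists] at hno
    refine h3 ?_
    filter_upwards [eventually_all.2 fun j => not_frequently.1 (hno j)] with m hm
    exact fun ⟨j, hj⟩ => hm j hj
  refine h1 j fun k => ?_
  obtain ⟨m, ⟨hm, hmj⟩, hkm⟩ := (hj.and_eventually (eventually_ge_atTop k)).exists
  have hf : ∀ t n i j, (seqShift t fun k => X k ω) n i j ≠ ⊤ := fun t n => h.ne_top _ ω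
  have h4 := hm k hkm
  have h5 := lvec_add_le k (f := fun k => X k ω) (m := m - k)
    (fun j => le_iSup (fun j => lvec (m - k) (seqShift k fun k => X k ω) j) j) j
  rw [Nat.add_sub_cancel' hkm, hmj] at h5
  change _ ≤ _ + mpLTop (m - k) (seqShift k fun k => X k ω) at h5
  rw [← EReal.coe_toReal (mpLTop_ne_top (hf k) (m - k)) (h2 k (m - k)),
    ← EReal.coe_toReal (x := mpLTop m fun k => X k ω) (mpLTop_ne_top (hf 0) m) (h2 0 m),
    ← EReal.sub_le_iff_le_add (by simp) (by simp), ← EReal.coe_sub] at h5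
  refine le_trans (EReal.coe_le_coe_iff.2 ?_) h5
  simp only [ha] at h4
  linarith

end IsMPSeq

section Growth

theorem exists_le_mul_add_of_eventually {u : ℕ → ℝ} {a : ℝ}
    (h : ∀ᶠ n : ℕ in atTop, u n ≤ a * n) : ∃ C, 0 ≤ C ∧ ∀ n : ℕ, u n ≤ a * n + C := by
  obtain ⟨n₀, hn₀⟩ := eventually_atTop.1 h
  refine ⟨∑ k ∈ Finset.range n₀, |u k - a * k|, Finset.sum_nonneg fun _ _ => abs_nonneg _,
    fun n => ?_⟩
  rcases lt_or_ge n n₀ with hn | hn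
  · have := Finset.single_le_sum (f := fun k : ℕ => |u k - a * k|) (fun _ _ => abs_nonneg _)
      (Finset.mem_range.2 hn)
    linarith [le_abs_self (u n - a * n)]
  · have : 0 ≤ ∑ k ∈ Finset.range n₀, |u k - a * k| := Finset.sum_nonneg fun _ _ => abs_nonneg _
    linarith [hn₀ n hn]

theorem exists_le_mul_add {u : ℕ → ℝ} {l a : ℝ}
    (h : Tendsto (fun n : ℕ => u n / n) atTop (𝓝 l)) (ha : l < a) :
    ∃ C, 0 ≤ C ∧ ∀ n : ℕ, u n ≤ a * n + C := by
  refine exists_le_mul_add_of_eventually ?_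
  filter_upwards [h.eventually_lt_const ha, eventually_gt_atTop 0] with n hn h0
  exact ((div_lt_iff₀ (Nat.cast_pos.2 h0)).1 hn).le

theorem exists_mul_sub_le {u : ℕ → ℝ} {l a : ℝ}
    (h : Tendsto (fun n : ℕ => u n / n) atTop (𝓝 l)) (ha : a < l) :
    ∃ C, 0 ≤ C ∧ ∀ n : ℕ, a * n - C ≤ u n := by
  obtain ⟨C, h0, hC⟩ := exists_le_mul_add (u := fun n => -u n) (l := -l) (a := -a)
    (by simpa [neg_div] using h.neg) (by linarith)
  exact ⟨C, h0, fun n => by linarith [hC n]⟩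

/-- Growth of a max-type recursion driven by increments `s` with average at most `p` and an
external input of growth rate `p`. -/
theorem exists_le_mul_add_of_rec {u s w : ℕ → ℝ} {b p D : ℝ} (hbp : b ≤ p)
    (hu : ∀ k, u (k + 1) ≤ max (s k + u k) (w k + p * k + D))
    (hs : Tendsto (fun k : ℕ => (∑ l ∈ Finset.range k, s l) / k) atTop (𝓝 b))
    (hw : ∀ ε > 0, ∃ C, ∀ k : ℕ, w k ≤ ε * k + C) {q : ℝ} (hq : p < q) :
    ∃ C, ∀ k : ℕ, u k ≤ q * k + C := by
  obtain ⟨ε, hε, hεq⟩ : ∃ ε > 0, p + 3 * ε ≤ q := ⟨(q - p) / 3, by linarith, by linarith⟩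
  obtain ⟨C₁, -, h₁⟩ := exists_le_mul_add hs (show b < b + ε by linarith)
  obtain ⟨C₂, -, h₂⟩ := exists_mul_sub_le hs (show b - ε < b by linarith)
  obtain ⟨C₃, h₃⟩ := hw ε hε
  set C := |u 0| + |C₃ + D + C₂ - (b - ε)|
  have key : ∀ k : ℕ, u k ≤ ∑ l ∈ Finset.range k, s l + (p - b + 2 * ε) * k + C := by
    intro k
    induction k with
    | zero =>
      simp only [Finset.range_zero, Finset.sum_empty, Nat.cast_zero, mul_zero, add_zero, zero_add]
      linarith [le_abs_self (u 0), abs_nonneg (C₃ + D + C₂ - (b - ε))]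
    | succ k ih =>
      refine (hu k).trans (max_le ?_ ?_)
      · rw [Finset.sum_range_succ]
        push_cast
        nlinarith
      · have h4 := h₂ (k + 1)
        have h5 := h₃ k
        have h6 := le_abs_self (C₃ + D + C₂ - (b - ε))
        have h7 := abs_nonneg (u 0)
        push_cast at h4 ⊢
        nlinarith
  refine ⟨C₁ + C, fun k => ?_⟩
  have h4 := key k
  have h5 := h₁ k
  have hk : (0 : ℝ) ≤ k := Nat.cast_nonneg k
  nlinarith

end Growth

section Upper

variable {d : ℕ} {f : ℕ → Fin d → Fin d → EReal}

theorem xvec_add_le_max {c D : Set (Fin d)} (hf : ∀ n i j, f n i j ≠ ⊤)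
    (hD : ∀ n, ∀ i ∈ c, ∀ j, f n i j ≠ ⊥ → j ∈ c ∨ j ∈ D) {t N : ℕ} {C Z : ℝ}
    (hC : ∀ i ∈ c, xvec f t i ≤ C) (hZ : ∀ j ∈ D, ∀ m ≤ N, xvec f (m + t) j ≤ Z) :
    ∀ m ≤ N, ∀ i ∈ c, xvec f (m + t) i ≤
      max (xvec (seqShift t fun n => mpRestrict c (f n)) m i + C)
        ((mpBoundSum (seqShift t f) m + Z : ℝ) : EReal)
  | 0, _, i, hi => by
    refine le_max_of_le_left ?_
    simpa [xvec] using hC i hi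
  | m + 1, hm, i, hi => by
    rw [Nat.add_right_comm]
    refine iSup_le fun j => ?_
    by_cases hne : f (m + t) i j = ⊥
    · simp [hne]
    have h0 := mpBoundSum_nonneg (seqShift t f) m
    have hb : f (m + t) i j ≤ mpBound (seqShift t f m) := le_mpBound (hf (m + t) i j)
    rw [mpBoundSum_succ]
    rcases hD (m + t) i hi j hne with hj | hj
    · have ih := xvec_add_le_max hf hD hC hZ m (by omega) j hj
      refine (add_le_add le_rfl ih).trans ?_
      rw [← (Monotone.map_max (f := fun x => f (m + t) i j + x)
        fun x y h => add_le_add le_rfl h).symm]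
      refine max_le_max ?_ ?_
      · rw [← add_assoc]
        refine add_le_add ?_ le_rfl
        refine le_trans ?_ (le_mpVec (seqShift t (fun n => mpRestrict c (f n)) m) _ i j)
        rw [show seqShift t (fun n => mpRestrict c (f n)) m i j = f (m + t) i j from
          mpRestrict_apply_of_mem hi hj]
      · rw [add_comm (mpBoundSum _ _) (mpBound _), add_assoc, EReal.coe_add (mpBound _)]
        exact add_le_add hb le_rfl
    · refine le_max_of_le_right ?_
      refine (add_le_add hb (hZ j hj m (by omega))).trans ?_
      rw [← EReal.coe_add, EReal.coe_le_coe_iff]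
      linarith

theorem exists_mpBoundSum_block_le {m : ℝ}
    (hB : Tendsto (fun n : ℕ => mpBoundSum f n / n) atTop (𝓝 m)) {N : ℕ} (hN : 0 < N) :
    ∀ ε > 0, ∃ C, ∀ k : ℕ, mpBoundSum (seqShift (k * N) f) N ≤ ε * k + C := by
  have hN' : (0 : ℝ) < N := Nat.cast_pos.2 hN
  intro ε hε
  have hpos : 0 < ε / (2 * N) := by positivity
  obtain ⟨C₁, -, h₁⟩ := exists_le_mul_add hB (show m < m + ε / (2 * N) by linarith)
  obtain ⟨C₂, -, h₂⟩ := exists_mul_sub_le hB (show m - ε / (2 * N) < m by linarith)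
  refine ⟨C₁ + C₂ + (m + ε / (2 * N)) * N, fun k => ?_⟩
  have h3 := mpBoundSum_add f (k * N) N
  have h4 := h₁ (k * N + N)
  have h5 := h₂ (k * N)
  push_cast at h4 h5
  have h6 : ε / (2 * N) * (k * N) = ε * k / 2 := by field_simp
  nlinarith

theorem exists_xvec_le_of_blocks {c D : Set (Fin d)} (hf : ∀ n i j, f n i j ≠ ⊤)
    (hD : ∀ n, ∀ i ∈ c, ∀ j, f n i j ≠ ⊥ → j ∈ c ∨ j ∈ D) {a α C m b K : ℝ} {N : ℕ}
    (hN : 0 < N) (haα : a < α)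
    (hDa : ∀ j ∈ D, ∀ n : ℕ, xvec f n j ≤ ((a * n + C : ℝ) : EReal))
    (hs : Tendsto (fun k : ℕ => (∑ l ∈ Finset.range k, mpTrunc K
      (mpTop (seqShift (l * N) fun n => mpRestrict c (f n)) N)) / k) atTop (𝓝 b))
    (hb : b ≤ a * N)
    (hB : Tendsto (fun n : ℕ => mpBoundSum f n / n) atTop (𝓝 m)) :
    ∃ C', ∀ i ∈ c, ∀ n : ℕ, xvec f n i ≤ ((α * n + C' : ℝ) : EReal) := by
  have hN' : (0 : ℝ) < N := Nat.cast_pos.2 hN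
  set s : ℕ → ℝ := fun l => mpTrunc K (mpTop (seqShift (l * N) fun n => mpRestrict c (f n)) N)
  set w : ℕ → ℝ := fun l => mpBoundSum (seqShift (l * N) f) N with hwdef
  set E : ℝ := |a| * N + |C|
  have hw : ∀ ε > 0, ∃ C, ∀ k : ℕ, w k ≤ ε * k + C := exists_mpBoundSum_block_le hB hN
  set u : ℕ → ℝ := fun k => Nat.rec 0 (fun k x => max (s k + x) (w k + a * N * k + E)) k with hu
  have hus : ∀ k, u (k + 1) = max (s k + u k) (w k + a * N * k + E) := fun k => rfl
  have hZ : ∀ k, ∀ j ∈ D, ∀ m ≤ N, xvec f (m + k * N) j ≤ ((a * N * k + E : ℝ) : EReal) := by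
    intro k j hj m hm
    refine (hDa j hj _).trans (EReal.coe_le_coe_iff.2 ?_)
    push_cast
    have hm' : (m : ℝ) ≤ N := Nat.cast_le.2 hm
    have h1 : a * m ≤ |a| * N :=
      mul_le_mul (le_abs_self a) hm' (Nat.cast_nonneg m) (abs_nonneg a)
    have h2 := le_abs_self C
    simp only [E]
    linarith
  have hx : ∀ k, ∀ i ∈ c, xvec f (k * N) i ≤ u k := by
    intro k
    induction k with
    | zero => intro i _; simp [xvec, hu]
    | succ k ih =>
      intro i hi
      rw [Nat.succ_mul, add_comm]
      refine (xvec_add_le_max hf hD ih (hZ k) N le_rfl i hi).trans ?_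
      rw [hus, EReal.coe_strictMono.monotone.map_max]
      refine max_le_max ?_ ?_
      · rw [EReal.coe_add]
        refine add_le_add ?_ le_rfl
        exact (le_iSup (fun i => xvec (seqShift (k * N) fun n => mpRestrict c (f n)) N i) i).trans
          (le_coe_mpTrunc (mpTop_ne_top (fun n => mpRestrict_ne_top (hf _)) N))
      · rw [EReal.coe_le_coe_iff]
        simp only [hwdef]
        linarith
  have haN : a * N < (a + α) / 2 * N := by
    refine mul_lt_mul_of_pos_right ?_ hN'
    linarith
  obtain ⟨C₁, h₁⟩ := exists_le_mul_add_of_rec hb (fun k => (hus k).le) hs hw haN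
  obtain ⟨C₂, h₂⟩ := hw ((α - a) / 2 * N) (mul_pos (by linarith) hN')
  refine ⟨|C₁| + |C₂| + E + |α| * N, fun i hi n => ?_⟩
  set k := n / N with hk
  have hn : n % N + k * N = n := by
    rw [mul_comm]; exact Nat.mod_add_div n N
  have hmN : n % N ≤ N := (Nat.mod_lt n hN).le
  have h3 := xvec_add_le_max hf hD (hx k) (hZ k) (n % N) hmN i hi
  rw [hn] at h3
  have hn' : ((n % N : ℕ) : ℝ) + k * N = n := by exact_mod_cast hn
  have hmN' : ((n % N : ℕ) : ℝ) ≤ N := Nat.cast_le.2 hmN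
  have h4 : α * (k * N) ≤ α * n + |α| * N := by
    have : -(|α| * N) ≤ α * (n % N : ℕ) := by
      have := mul_le_mul (neg_le_abs α) hmN' (Nat.cast_nonneg _) (abs_nonneg α)
      linarith
    rw [← hn']
    linarith
  have hwk : mpBoundSum (seqShift (k * N) f) (n % N) ≤ w k := mpBoundSum_mono _ hmN
  have h5 := h₁ k
  have h6 := h₂ k
  have h7 := le_abs_self C₁
  have h8 := le_abs_self C₂
  have hE : 0 ≤ E := by positivity
  have h9 : (a + α) / 2 * N * k + (α - a) / 2 * N * k = α * (k * N) := by ring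
  have h10 : a * N * k ≤ (a + α) / 2 * N * k := by
    exact mul_le_mul_of_nonneg_right haN.le (Nat.cast_nonneg k)
  refine h3.trans (max_le ?_ ?_)
  · have h11 : xvec (seqShift (k * N) fun n => mpRestrict c (f n)) (n % N) i ≤ (w k : EReal) := by
      refine (xvec_mono (g := seqShift (k * N) f) (fun n i j => mpRestrict_le _ _ _ _) _ _).trans ?_
      refine (xvec_le_mpBoundSum (fun n => hf _) _ _).trans (EReal.coe_le_coe_iff.2 hwk)
    refine (add_le_add h11 le_rfl).trans ?_
    rw [← EReal.coe_add, EReal.coe_le_coe_iff]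
    linarith
  · rw [EReal.coe_le_coe_iff]
    linarith [abs_nonneg C₁]

end Upper

section Graph

variable {d : ℕ} {r : Fin d → Fin d → Prop}

/-- The strongly connected component of a node. -/
def sccOf {d : ℕ} (r : Fin d → Fin d → Prop) (i : Fin d) : Set (Fin d) :=
  {j | Relation.ReflTransGen r i j ∧ Relation.ReflTransGen r j i}

theorem isSCC_sccOf (i : Fin d) : IsSCC r (sccOf r i) := ⟨i, rfl⟩

theorem mem_sccOf (i : Fin d) : i ∈ sccOf r i := ⟨.refl, .refl⟩

theorem le_limFormula {γ : Set (Fin d) → EReal} {c : Set (Fin d)} {i : Fin d} (hc : IsSCC r c)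
    (hi : nodeReach r i c) : γ c ≤ limFormula r γ i :=
  le_iSup₂_of_le c ⟨hc, hi⟩ le_rfl

theorem limFormula_anti {γ : Set (Fin d) → EReal} {i j : Fin d}
    (h : Relation.ReflTransGen r i j) : limFormula r γ j ≤ limFormula r γ i :=
  iSup₂_le fun _ hc => le_limFormula hc.1 (by
    obtain ⟨k, hk, hjk⟩ := hc.2
    exact ⟨k, hk, h.trans hjk⟩)

theorem exists_isSCC_eq_limFormula (γ : Set (Fin d) → EReal) (i : Fin d) :
    ∃ c, IsSCC r c ∧ nodeReach r i c ∧ γ c = limFormula r γ i := by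
  let T := {c : Set (Fin d) // IsSCC r c ∧ nodeReach r i c}
  have : Nonempty T := ⟨⟨sccOf r i, isSCC_sccOf i, i, mem_sccOf i, .refl⟩⟩
  obtain ⟨c, hc⟩ := exists_eq_ciSup_of_finite (f := fun c : T => γ c.1)
  refine ⟨c.1, c.2.1, c.2.2, hc.trans ?_⟩
  rw [limFormula, iSup_subtype]

end Graph

namespace IsMPSeq

variable {Ω : Type*} [MeasurableSpace Ω] {μ : Measure Ω} {d : ℕ}
  {X : ℕ → Ω → Fin d → Fin d → EReal}

theorem ae_of_ae_zero (h : IsMPSeq X μ) {p : (Fin d → Fin d → EReal) → Prop}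
    (hp : MeasurableSet {M | p M}) (h0 : ∀ᵐ ω ∂μ, p (X 0 ω)) : ∀ᵐ ω ∂μ, ∀ n, p (X n ω) := by
  refine ae_all_iff.2 fun n => ?_
  rw [← ae_map_iff (h.iid.meas n).aemeasurable hp, h.iid.ident n,
    ae_map_iff (h.iid.meas 0).aemeasurable hp]
  exact h0

theorem measurableSet_entry_ne_bot (i j : Fin d) :
    MeasurableSet {M : Fin d → Fin d → EReal | M i j ≠ ⊥} := by
  have h : Measurable fun M : Fin d → Fin d → EReal => M i j := by fun_prop
  exact h (measurableSet_singleton ⊥).compl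

theorem ae_arcRel (h : IsMPSeq X μ) :
    ∀ᵐ ω ∂μ, ∀ n i j, X n ω i j ≠ ⊥ → arcRel μ (X 0) i j := by
  have h1 : ∀ i j, ∀ᵐ ω ∂μ, ∀ n, X n ω i j ≠ ⊥ → arcRel μ (X 0) i j := by
    intro i j
    by_cases hr : arcRel μ (X 0) i j
    · exact Eventually.of_forall fun _ _ _ => hr
    · simp only [hr, imp_false]
      refine h.ae_of_ae_zero (p := fun M => ¬ M i j ≠ ⊥) (measurableSet_entry_ne_bot i j).compl ?_
      rw [ae_iff]
      simp only [arcRel, not_not] at hr ⊢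
      exact hr
  filter_upwards [ae_all_iff.2 fun i => ae_all_iff.2 (h1 i)] with ω hω n i j
  exact hω i j n

/-- The coordinates grow at most at the rate given by the components they reach. -/
theorem ae_exists_xvec_le [IsProbabilityMeasure μ] (h : IsMPSeq X μ) {γ : Set (Fin d) → EReal}
    (hγ : ∀ c, IsSCC (arcRel μ (X 0)) c → ∀ᵐ ω ∂μ, Tendsto
      (fun n => mpScale n (mpTop (fun m => mpRestrict c (X m ω)) n)) atTop (𝓝 (γ c)))
    (i : Fin d) {α : ℝ} (hα : limFormula (arcRel μ (X 0)) γ i < α) :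
    ∀ᵐ ω ∂μ, ∃ C : ℝ, ∀ n : ℕ, xvec (fun m => X m ω) n i ≤ ((α * n + C : ℝ) : EReal) := by
  classical
  set r := arcRel μ (X 0) with hr
  induction hcard : {k | Relation.ReflTransGen r i k}.ncard using Nat.strong_induction_on
    generalizing i α with
  | _ q ih =>
    subst hcard
    set c := sccOf r i with hc
    set D : Set (Fin d) := {j | Relation.ReflTransGen r i j ∧ ¬ Relation.ReflTransGen r j i} with hD
    obtain ⟨a, ha1, ha2⟩ := EReal.lt_iff_exists_real_btwn.1 hα
    rw [EReal.coe_lt_coe_iff] at ha2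
    have hlow : ∀ᵐ ω ∂μ, ∀ j : D, ∃ C : ℝ, ∀ n : ℕ,
        xvec (fun m => X m ω) n j ≤ ((a * n + C : ℝ) : EReal) := by
      refine ae_all_iff.2 fun j => ih _ ?_ j.1 ((limFormula_anti j.2.1).trans_lt ha1) rfl
      refine Set.ncard_lt_ncard ⟨fun k hk => j.2.1.trans hk, fun hsub => ?_⟩ (Set.toFinite _)
      exact j.2.2 (hsub (show i ∈ {k | Relation.ReflTransGen r i k} from .refl))
    have hγc : γ c < a := (le_limFormula (isSCC_sccOf i) ⟨i, mem_sccOf i, .refl⟩).trans_lt ha1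
    obtain ⟨N, hN, K, hK, hint⟩ := (h.restrict c).exists_integral_mpTrunc_le
      (hγ c (isSCC_sccOf i)) hγc
    have hlaw := (h.restrict c).iid.block_strong_law N (F := fun f => mpTrunc K (mpTop f N))
      ((measurable_mpTrunc K).comp (measurable_mpTop N))
      (fun f g hfg => congrArg (mpTrunc K) (dependsOnCoords_mpTop N f g hfg))
      ((h.restrict c).integrable_mpTrunc_mpTop N hK)
    filter_upwards [hlow, hlaw, h.tendsto_mpBoundSum, h.ae_arcRel] with ω h1 h2 h3 h4
    choose C hC using h1
    obtain ⟨C', hC'⟩ := exists_xvec_le_of_blocks (f := fun m => X m ω) (c := c) (D := D)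
      (C := ∑ j, |C j|) (fun n => h.ne_top n ω)
      (fun n k hk j hkj => by
        have hkj' : Relation.ReflTransGen r i j := hk.1.tail (h4 n k j hkj)
        by_cases hji : Relation.ReflTransGen r j i
        · exact Or.inl ⟨hkj', hji⟩
        · exact Or.inr ⟨hkj', hji⟩) hN ha2
      (fun j hj n => (hC ⟨j, hj⟩ n).trans (EReal.coe_le_coe_iff.2 (by
        have := Finset.single_le_sum (f := fun j => |C j|) (fun _ _ => abs_nonneg _)
          (Finset.mem_univ ⟨j, hj⟩)
        linarith [le_abs_self (C ⟨j, hj⟩)]))) h2 hint h3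
    exact ⟨C', hC' i (mem_sccOf i)⟩

end IsMPSeq

section Slope

variable {d : ℕ} {f : ℕ → Fin d → Fin d → EReal}

/-- The sequences whose backward products have row `i` growing at least at rate `β`. -/
def slopeSet {d : ℕ} (β : ℝ) (i : Fin d) : Set (ℕ → Fin d → Fin d → EReal) :=
  {f | ∃ C : ℕ, ∀ k : ℕ, ((β * k - C : ℝ) : EReal) ≤ lvec k f i}

theorem measurableSet_slopeSet (β : ℝ) (i : Fin d) : MeasurableSet (slopeSet β i) := by
  have : slopeSet β i = ⋃ C : ℕ, ⋂ k : ℕ,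
      {f : ℕ → Fin d → Fin d → EReal | ((β * k - C : ℝ) : EReal) ≤ lvec k f i} := by
    ext f; simp [slopeSet]
  rw [this]
  exact MeasurableSet.iUnion fun C => MeasurableSet.iInter fun k =>
    measurableSet_le measurable_const (measurable_lvec k i)

theorem mem_slopeSet_of_arc {β : ℝ} {i j : Fin d} (hij : f 0 i j ≠ ⊥)
    (h : seqShift 1 f ∈ slopeSet β j) : f ∈ slopeSet β i := by
  obtain ⟨C, hC⟩ := h
  refine ⟨⌈C + mpBound (f 0) + |β|⌉₊, fun k => ?_⟩
  have h1 := Nat.le_ceil (C + mpBound (f 0) + |β|)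
  have h2 := mpBound_nonneg (f 0)
  have h3 := le_abs_self β
  rcases k with _ | k
  · have h4 : lvec 0 f i = ((0 : ℝ) : EReal) := rfl
    rw [h4, EReal.coe_le_coe_iff]
    simp
  · refine le_trans ?_ ((add_le_add (neg_mpBound_le hij) (hC k)).trans (add_lvec_le k f i j))
    rw [← EReal.coe_add, EReal.coe_le_coe_iff]
    push_cast
    linarith

/-- There is a path of length `t` from `i` to `h` inside `H`, along the finite entries of `f`. -/
def PathIn {d : ℕ} (H : Set (Fin d)) (f : ℕ → Fin d → Fin d → EReal) (i : Fin d) :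
    ℕ → Fin d → Prop
  | 0, h => h = i
  | t + 1, h => h ∈ H ∧ ∃ h', PathIn H f i t h' ∧ f t h' h ≠ ⊥

theorem PathIn.mem {H : Set (Fin d)} {i : Fin d} (hi : i ∈ H) :
    ∀ {t : ℕ} {h : Fin d}, PathIn H f i t h → h ∈ H
  | 0, _, hp => hp ▸ hi
  | _ + 1, _, hp => hp.1

theorem exists_pathIn {H : Set (Fin d)} {i : Fin d} (hi : i ∈ H)
    (hH : ∀ n, ∀ i ∈ H, ∃ j ∈ H, f n i j ≠ ⊥) : ∀ t, ∃ h, PathIn H f i t h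
  | 0 => ⟨i, rfl⟩
  | t + 1 => by
    obtain ⟨h, hp⟩ := exists_pathIn hi hH t
    obtain ⟨j, hj, hne⟩ := hH t h (hp.mem hi)
    exact ⟨j, hj, h, hp, hne⟩

theorem PathIn.mem_slopeSet {H : Set (Fin d)} {i : Fin d} {β : ℝ} :
    ∀ {t : ℕ} {h : Fin d}, PathIn H f i t h → seqShift t f ∈ slopeSet β h → f ∈ slopeSet β i
  | 0, _, hp, hs => by
    subst hp
    exact hs
  | t + 1, h, ⟨_, h', hp, hne⟩, hs => by
    refine hp.mem_slopeSet (mem_slopeSet_of_arc (f := seqShift t f) (j := h) ?_ ?_)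
    · simpa [seqShift] using hne
    · rwa [seqShift_seqShift, add_comm]

theorem dependsOnCoords_pathIn {H : Set (Fin d)} {i : Fin d} : ∀ (t : ℕ) (h : Fin d),
    DependsOnCoords (fun f => PathIn H f i t h) {n | n < t}
  | 0, _ => fun _ _ _ => rfl
  | t + 1, h => fun f g hfg => by
    have ih := fun h' => dependsOnCoords_pathIn (H := H) (i := i) t h' f g
      fun n hn => hfg n (Nat.lt_succ_of_lt hn)
    simp only at ih
    simp only [PathIn, ih, hfg t (Nat.lt_succ_self t)]

theorem measurableSet_pathIn {H : Set (Fin d)} {i : Fin d} : ∀ (t : ℕ) (h : Fin d),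
    MeasurableSet {f | PathIn H f i t h}
  | 0, _ => MeasurableSet.const _
  | t + 1, h => by
    have : {f : ℕ → Fin d → Fin d → EReal | PathIn H f i (t + 1) h} =
        {_f | h ∈ H} ∩ ⋃ h', {f | PathIn H f i t h'} ∩ {f | f t h' h ≠ ⊥} := by
      ext f; simp [PathIn]
    rw [this]
    refine (MeasurableSet.const _).inter (MeasurableSet.iUnion fun h' =>
      (measurableSet_pathIn t h').inter ?_)
    have hm : Measurable fun f : ℕ → Fin d → Fin d → EReal => f t h' h := by fun_prop
    exact hm (measurableSet_singleton ⊥).compl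

end Slope

namespace IsMPSeq

variable {Ω : Type*} [MeasurableSpace Ω] {μ : Measure Ω} [IsProbabilityMeasure μ] {d : ℕ}
  {X : ℕ → Ω → Fin d → Fin d → EReal}

theorem measure_slopeSet_ne_zero_of_arc (h : IsMPSeq X μ) {β : ℝ} {i j : Fin d}
    (hij : arcRel μ (X 0) i j) (hj : μ {ω | (fun n => X n ω) ∈ slopeSet β j} ≠ 0) :
    μ {ω | (fun n => X n ω) ∈ slopeSet β i} ≠ 0 := by
  have hm : Measurable fun f : ℕ → Fin d → Fin d → EReal => f 0 i j := by fun_prop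
  have := h.iid.measure_inter_shift (t := 1) (B := {f | f 0 i j ≠ ⊥})
    (hm (measurableSet_singleton ⊥).compl)
    (fun f g hfg => by simp only [Set.mem_ofPred_eq]; rw [hfg 0 (by simp)])
    (measurableSet_slopeSet β j)
  refine ne_bot_of_le_ne_bot (b := μ {ω | (fun n => X n ω) ∈
      {f : ℕ → Fin d → Fin d → EReal | f 0 i j ≠ ⊥} ∧
      (seqShift 1 fun n => X n ω) ∈ slopeSet β j}) ?_ ?_
  · rw [this]
    exact mul_ne_zero hij hj
  · exact measure_mono fun ω hω => mem_slopeSet_of_arc hω.1 hω.2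

theorem measure_slopeSet_ne_zero_of_reflTransGen (h : IsMPSeq X μ) {β : ℝ} {i j : Fin d}
    (hij : Relation.ReflTransGen (arcRel μ (X 0)) i j)
    (hj : μ {ω | (fun n => X n ω) ∈ slopeSet β j} ≠ 0) :
    μ {ω | (fun n => X n ω) ∈ slopeSet β i} ≠ 0 := by
  induction hij using Relation.ReflTransGen.head_induction_on with
  | refl => exact hj
  | head hab _ ih => exact h.measure_slopeSet_ne_zero_of_arc hab ih

/-- Zero-one law: if no row of the submatrix indexed by `H` is trivial, growth with positive
probability from every node of `H` implies almost sure growth. -/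
theorem ae_mem_slopeSet (h : IsMPSeq X μ) {H : Set (Fin d)}
    (hH : ∀ᵐ ω ∂μ, ∀ n, ∀ i ∈ H, ∃ j ∈ H, X n ω i j ≠ ⊥) {β : ℝ}
    (hpos : ∀ i ∈ H, μ {ω | (fun n => X n ω) ∈ slopeSet β i} ≠ 0) {i : Fin d} (hi : i ∈ H) :
    ∀ᵐ ω ∂μ, (fun n => X n ω) ∈ slopeSet β i := by
  have hmS : ∀ {B : Set (ℕ → Fin d → Fin d → EReal)}, MeasurableSet B →
      MeasurableSet {ω | (fun n => X n ω) ∈ B} := fun hB => h.iid.measurable_seq hB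
  obtain ⟨h₀, hh₀, hmin⟩ := Set.exists_min_image H
    (fun i => μ.real {ω | (fun n => X n ω) ∈ slopeSet β i}) (Set.toFinite H) ⟨i, hi⟩
  set q := μ.real {ω | (fun n => X n ω) ∈ slopeSet β h₀} with hq
  have hq0 : 0 < q := ENNReal.toReal_pos (hpos h₀ hh₀) (measure_ne_top _ _)
  have hq1 : q ≤ 1 := measureReal_le_one
  have hd : (1 : ℝ) ≤ d := by exact_mod_cast (Nat.one_le_iff_ne_zero.2 fun h0 => by
    subst h0; exact i.elim0)
  have hqd : q / d ≤ 1 := (div_le_self hq0.le hd).trans hq1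
  have hqd0 : 0 < q / d := by positivity
  refine h.iid.measure_eq_zero_of_le (measurableSet_slopeSet β i).compl (p := 1 - q / d)
    (by linarith) (by linarith) fun t B hB hBt => ?_
  have hcover : μ.real {ω | (fun n => X n ω) ∈ B} ≤
      ∑ h : Fin d, μ.real {ω | (fun n => X n ω) ∈ B ∩ {f | PathIn H f i t h}} := by
    refine le_trans ?_ (measureReal_iUnion_fintype_le _)
    refine ENNReal.toReal_mono (measure_ne_top _ _) (measure_mono_ae ?_)
    filter_upwards [hH] with ω hω hωB
    obtain ⟨k, hk⟩ := exists_pathIn hi hω t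
    exact Set.mem_iUnion.2 ⟨k, hωB, hk⟩
  have hterm : ∀ k : Fin d, μ.real {ω | (fun n => X n ω) ∈ B ∩ {f | PathIn H f i t k}} * q ≤
      μ.real {ω | (fun n => X n ω) ∈ slopeSet β i ∩ B} := by
    intro k
    by_cases hk : k ∈ H
    · have h1 := h.iid.measure_inter_shift (t := t) (B := B ∩ {f | PathIn H f i t k})
        (hB.inter (measurableSet_pathIn t k))
        (fun f g hfg => by
          have e1 := hBt f g hfg
          have e2 := dependsOnCoords_pathIn (H := H) (i := i) t k f g hfg
          simp only [Set.mem_inter_iff, Set.mem_ofPred_eq] at e1 e2 ⊢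
          rw [e1, e2])
        (measurableSet_slopeSet β k)
      have h2 := congrArg ENNReal.toReal h1
      rw [ENNReal.toReal_mul] at h2
      refine (mul_le_mul_of_nonneg_left (hmin k hk) measureReal_nonneg).trans ?_
      refine h2.symm.le.trans (ENNReal.toReal_mono (measure_ne_top _ _) (measure_mono ?_))
      rintro ω ⟨⟨h3, h4⟩, h5⟩
      exact ⟨PathIn.mem_slopeSet h4 h5, h3⟩
    · have : {ω | (fun n => X n ω) ∈ B ∩ {f | PathIn H f i t k}} = ∅ := by
        ext ω
        simp only [Set.mem_ofPred_eq, Set.mem_inter_iff, Set.mem_empty_iff_false, iff_false,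
          not_and]
        exact fun _ hp => hk (hp.mem hi)
      rw [this]
      simp
  have hsum : μ.real {ω | (fun n => X n ω) ∈ B} * q ≤
      d * μ.real {ω | (fun n => X n ω) ∈ slopeSet β i ∩ B} := by
    refine (mul_le_mul_of_nonneg_right hcover hq0.le).trans ?_
    rw [Finset.sum_mul]
    refine (Finset.sum_le_sum fun k _ => hterm k).trans ?_
    simp
  have hsplit : μ.real {ω | (fun n => X n ω) ∈ (slopeSet β i)ᶜ ∩ B} +
      μ.real {ω | (fun n => X n ω) ∈ slopeSet β i ∩ B} = μ.real {ω | (fun n => X n ω) ∈ B} := by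
    rw [← measureReal_union]
    · congr 1
      ext ω
      simp only [Set.mem_union, Set.mem_ofPred_eq, Set.mem_inter_iff, Set.mem_compl_iff]
      tauto
    · refine Set.disjoint_left.2 fun ω h1 h2 => h1.1 h2.1
    · exact hmS ((measurableSet_slopeSet β i).inter hB)
  have hfin : q / d * μ.real {ω | (fun n => X n ω) ∈ B} ≤
      μ.real {ω | (fun n => X n ω) ∈ slopeSet β i ∩ B} := by
    rw [div_mul_eq_mul_div, div_le_iff₀ (by linarith)]
    linarith
  linarith

theorem measure_slopeSet_ne_zero (h : IsMPSeq X μ) {H c : Set (Fin d)}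
    {g ε : ℝ} (hε : 0 < ε)
    (hΓ : ∀ᵐ ω ∂μ, Tendsto
      (fun n => mpScale n (mpTop (fun m => mpRestrict c (X m ω)) n)) atTop (𝓝 (g : EReal)))
    (hc : IsSCC (arcRel μ (X 0)) c) {i : Fin d} (hi : nodeReach (arcRel μ (X 0)) i c)
    (hH : ∀ a, Relation.ReflTransGen (arcRel μ (X 0)) i a → nodeReach (arcRel μ (X 0)) a c →
      a ∈ H) :
    μ {ω | (fun n => mpRestrict H (X n ω)) ∈ slopeSet (g - ε) i} ≠ 0 := by
  obtain ⟨j, hj⟩ := (h.restrict c).exists_measure_lvec_pos hΓ hε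
  have hjc : j ∈ c := by
    by_contra hjc
    refine hj ?_
    convert measure_empty (μ := μ)
    ext ω
    simp only [Set.mem_ofPred_eq, Set.mem_empty_iff_false, iff_false]
    intro hω
    have h1 := hω 1
    have h2 : lvec 1 (fun n => mpRestrict c (X n ω)) j = ⊥ := by
      rw [lvec_succ]
      simp [mpRestrict, hjc]
    rw [h2] at h1
    exact absurd h1 (not_le.2 (EReal.bot_lt_coe _))
  obtain ⟨i₀, rfl⟩ := hc
  obtain ⟨k, hk, hik⟩ := hi
  have hij : Relation.ReflTransGen (arcRel μ (X 0)) i j := (hik.trans hk.2).trans hjc.1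
  have hcH : {l | Relation.ReflTransGen (arcRel μ (X 0)) i₀ l ∧
      Relation.ReflTransGen (arcRel μ (X 0)) l i₀} ⊆ H := fun l hl =>
    hH l ((hik.trans hk.2).trans hl.1) ⟨l, hl, .refl⟩
  have hbase : μ {ω | (fun n => mpRestrict H (X n ω)) ∈ slopeSet (g - ε) j} ≠ 0 := by
    refine ne_bot_of_le_ne_bot hj (measure_mono fun ω hω => ⟨0, fun k => ?_⟩)
    simp only [Nat.cast_zero, sub_zero]
    exact (hω k).trans (lvec_mono k (fun n i j => mpRestrict_mono hcH _ _ _) j)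
  refine (h.restrict H).measure_slopeSet_ne_zero_of_reflTransGen ?_ hbase
  have : ∀ a, Relation.ReflTransGen (arcRel μ (X 0)) i a →
      Relation.ReflTransGen (arcRel μ (X 0)) a j →
      Relation.ReflTransGen (arcRel μ fun ω => mpRestrict H (X 0 ω)) a j := by
    intro a hia haj
    induction haj using Relation.ReflTransGen.head_induction_on with
    | refl => exact .refl
    | head hab hbj ih =>
      refine .head ?_ (ih (hia.tail hab))
      have ha := hH _ hia ⟨j, hjc, .head hab hbj⟩
      have hb := hH _ (hia.tail hab) ⟨j, hjc, hbj⟩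
      simpa only [arcRel, mpRestrict_apply_of_mem ha hb] using hab
  exact this i .refl hij

end IsMPSeq

section MinCoord

variable {d : ℕ} {f : ℕ → Fin d → Fin d → EReal} {H : Set (Fin d)}

/-- The smallest coordinate of `xvec f n` indexed by `H`. -/
def mpInf {d : ℕ} (H : Set (Fin d)) (f : ℕ → Fin d → Fin d → EReal) (n : ℕ) : EReal :=
  ⨅ i, ⨅ (_ : i ∈ H), xvec f n i

theorem mpInf_le (n : ℕ) {i : Fin d} (hi : i ∈ H) : mpInf H f n ≤ xvec f n i :=
  iInf₂_le i hi

theorem measurable_mpInf (n : ℕ) :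
    Measurable fun f : ℕ → Fin d → Fin d → EReal => mpInf H f n :=
  Measurable.iInf fun i => Measurable.iInf fun _ => measurable_xvec n i

theorem dependsOnCoords_mpInf (n : ℕ) :
    DependsOnCoords (fun f : ℕ → Fin d → Fin d → EReal => mpInf H f n) {k | k < n} := by
  intro f g h
  simp only [mpInf]
  rw [xvec_congr fun k hk => h k hk]

theorem neg_mpBoundSum_le_mpInf (hH : ∀ n, ∀ i ∈ H, ∃ j ∈ H, f n i j ≠ ⊥) (n : ℕ) :
    ((-mpBoundSum f n : ℝ) : EReal) ≤ mpInf H f n :=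
  le_iInf₂ fun i hi => neg_mpBoundSum_le_xvec hH n i hi

theorem mpInf_le_mpBoundSum (hf : ∀ n i j, f n i j ≠ ⊤) (hne : H.Nonempty) (n : ℕ) :
    mpInf H f n ≤ mpBoundSum f n :=
  (mpInf_le n hne.choose_spec).trans (xvec_le_mpBoundSum hf n _)

theorem coe_toReal_mpInf (hf : ∀ n i j, f n i j ≠ ⊤) (hne : H.Nonempty)
    (hH : ∀ n, ∀ i ∈ H, ∃ j ∈ H, f n i j ≠ ⊥) (n : ℕ) :
    ((mpInf H f n).toReal : EReal) = mpInf H f n :=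
  EReal.coe_toReal (ne_top_of_le_ne_top (EReal.coe_ne_top _) (mpInf_le_mpBoundSum hf hne n))
    (ne_bot_of_le_ne_bot (EReal.coe_ne_bot _) (neg_mpBoundSum_le_mpInf hH n))

theorem abs_toReal_mpInf_le (hf : ∀ n i j, f n i j ≠ ⊤) (hne : H.Nonempty)
    (hH : ∀ n, ∀ i ∈ H, ∃ j ∈ H, f n i j ≠ ⊥) (n : ℕ) :
    |(mpInf H f n).toReal| ≤ mpBoundSum f n := by
  have h1 := neg_mpBoundSum_le_mpInf hH n
  have h2 := mpInf_le_mpBoundSum hf hne n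
  rw [← coe_toReal_mpInf hf hne hH n, EReal.coe_le_coe_iff] at h1 h2
  exact abs_le.2 ⟨h1, h2⟩

theorem sum_mpInf_le_xvec (hf : ∀ n i j, f n i j ≠ ⊤) (hne : H.Nonempty)
    (hH : ∀ n, ∀ i ∈ H, ∃ j ∈ H, f n i j ≠ ⊥) (hsub : ∀ n i j, f n i j ≠ ⊥ → j ∈ H) (N k : ℕ) :
    ∀ i ∈ H, ((∑ l ∈ Finset.range k, (mpInf H (seqShift (l * N) f) N).toReal : ℝ) : EReal) ≤
      xvec f (k * N) i := by
  induction k with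
  | zero => intro i _; simp [xvec]
  | succ k ih =>
    intro i hi
    rw [Nat.succ_mul, add_comm (k * N)]
    refine le_trans ?_ (le_xvec_add hsub ih N i hi)
    rw [Finset.sum_range_succ, EReal.coe_add, add_comm (Real.toEReal _)]
    gcongr
    rw [coe_toReal_mpInf (f := seqShift (k * N) f) (fun n => hf _) hne (fun n => hH _)]
    exact mpInf_le N hi

theorem exists_le_xvec_of_blocks (hf : ∀ n i j, f n i j ≠ ⊤) (hne : H.Nonempty)
    (hH : ∀ n, ∀ i ∈ H, ∃ j ∈ H, f n i j ≠ ⊥) (hsub : ∀ n i j, f n i j ≠ ⊥ → j ∈ H)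
    {N : ℕ} (hN : 0 < N) {b β m : ℝ} (hb : β * N < b)
    (hs : Tendsto (fun k : ℕ => (∑ l ∈ Finset.range k,
      (mpInf H (seqShift (l * N) f) N).toReal) / k) atTop (𝓝 b))
    (hB : Tendsto (fun n : ℕ => mpBoundSum f n / n) atTop (𝓝 m)) :
    ∃ C, ∀ i ∈ H, ∀ n : ℕ, ((β * n - C : ℝ) : EReal) ≤ xvec f n i := by
  obtain ⟨ε, hε, hεb⟩ : ∃ ε > 0, β * N + 2 * ε = b := ⟨(b - β * N) / 2, by linarith, by ring⟩
  obtain ⟨C₁, -, h₁⟩ := exists_mul_sub_le hs (show b - ε < b by linarith)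
  obtain ⟨C₂, h₂⟩ := exists_mpBoundSum_block_le hB hN ε hε
  refine ⟨C₁ + C₂ + |β| * N, fun i hi n => ?_⟩
  have h3 := le_xvec_add hsub (sum_mpInf_le_xvec hf hne hH hsub N (n / N)) (n % N) i hi
  rw [Nat.mod_add_div'] at h3
  refine le_trans ?_ h3
  have h4 := neg_mpBoundSum_le_xvec (f := seqShift (n / N * N) f) (fun n => hH _) (n % N) i hi
  refine le_trans ?_ (add_le_add_left h4 _)
  rw [← EReal.coe_add, EReal.coe_le_coe_iff]
  have h5 := h₁ (n / N)
  have h6 := h₂ (n / N)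
  have h7 : mpBoundSum (seqShift (n / N * N) f) (n % N) ≤ mpBoundSum (seqShift (n / N * N) f) N :=
    mpBoundSum_mono _ (Nat.mod_lt n hN).le
  have h8 : (n : ℝ) = (n % N : ℕ) + (n / N : ℕ) * N := by
    exact_mod_cast (Nat.mod_add_div' n N).symm
  have h9 : β * (n % N : ℕ) ≤ |β| * N :=
    (mul_le_mul_of_nonneg_right (le_abs_self β) (Nat.cast_nonneg _)).trans
      (mul_le_mul_of_nonneg_left (Nat.cast_le.2 (Nat.mod_lt n hN).le) (abs_nonneg β))
  have h10 : β * n = β * (n % N : ℕ) + (β * N) * (n / N : ℕ) := by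
    conv_lhs => rw [h8]
    ring
  have h11 : β * N = b - 2 * ε := by linarith
  rw [h11] at h10
  linarith

theorem mpBoundSum_natRev (f : ℕ → Fin d → Fin d → EReal) (n : ℕ) :
    mpBoundSum (fun k => f (natRev n k)) n = mpBoundSum f n := by
  simp only [mpBoundSum]
  rw [← Finset.sum_range_reflect (fun k => mpBound (f k)) n]
  refine Finset.sum_congr rfl fun k hk => ?_
  rw [natRev, if_pos (Finset.mem_range.1 hk)]

end MinCoord

namespace IsMPSeq

variable {Ω : Type*} [MeasurableSpace Ω] {μ : Measure Ω} [IsProbabilityMeasure μ] {d : ℕ}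
  {X : ℕ → Ω → Fin d → Fin d → EReal}

/-- Almost sure growth of the backward products at rate `β` gives almost sure growth of the
forward orbit at any smaller rate. -/
theorem ae_exists_le_xvec_of_slopeSet (h : IsMPSeq X μ) {H : Set (Fin d)}
    (hH : ∀ᵐ ω ∂μ, ∀ n, ∀ i ∈ H, ∃ j ∈ H, X n ω i j ≠ ⊥)
    (hsub : ∀ ω n i j, X n ω i j ≠ ⊥ → j ∈ H) {β β' : ℝ}
    (hβ : ∀ i ∈ H, ∀ᵐ ω ∂μ, (fun n => X n ω) ∈ slopeSet β i) (hlt : β' < β) :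
    ∀ᵐ ω ∂μ, ∃ C : ℝ, ∀ i ∈ H, ∀ n : ℕ,
      ((β' * n - C : ℝ) : EReal) ≤ xvec (fun m => X m ω) n i := by
  rcases H.eq_empty_or_nonempty with rfl | hne
  · simp
  obtain ⟨ε, hε, hεβ⟩ : ∃ ε > 0, β' + 3 * ε = β := ⟨(β - β') / 3, by linarith, by ring⟩
  have hmF : ∀ n, Measurable fun f : ℕ → Fin d → Fin d → EReal => (mpInf H f n).toReal :=
    fun n => measurable_ereal_toReal.comp (measurable_mpInf n)
  have hW : ∀ n, Integrable (fun ω => (mpInf H (fun k => X k ω) n).toReal) μ := by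
    intro n
    refine h.integrable_of_abs_le ((hmF n).comp h.iid.measurable_seq).aestronglyMeasurable n 0 ?_
    filter_upwards [hH] with ω hω
    rw [add_zero]
    exact abs_toReal_mpInf_le (fun n => h.ne_top n ω) hne hω n
  have hid := fun n => h.iid.identDistrib_reindex (natRev_injective n) (hmF n)
  obtain ⟨N, hN, hNle⟩ := h.exists_le_integral
    (Z := fun n ω => (mpInf H (fun k => X (natRev n k) ω) n).toReal) (b := β - ε)
    (fun n => (hid n).integrable_iff.2 (hW n)) (fun n => by
      filter_upwards [hH] with ω hω
      have := abs_toReal_mpInf_le (f := fun k => X (natRev n k) ω)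
        (fun k => h.ne_top _ ω) hne (fun k => hω _) n
      rw [mpBoundSum_natRev (fun k => X k ω)] at this
      exact (abs_le.1 this).1) (by
      have hβ' : ∀ᵐ ω ∂μ, ∀ i, i ∈ H → (fun n => X n ω) ∈ slopeSet β i :=
        ae_all_iff.2 fun i => by
          by_cases hi : i ∈ H
          · filter_upwards [hβ i hi] with ω hω _ using hω
          · exact Eventually.of_forall fun _ hi' => absurd hi' hi
      filter_upwards [hH, hβ'] with ω hω hω'
      have hex : ∀ i, ∃ C : ℕ, i ∈ H → ∀ k : ℕ,
          ((β * k - C : ℝ) : EReal) ≤ lvec k (fun n => X n ω) i := by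
        intro i
        by_cases hi : i ∈ H
        · obtain ⟨C, hC⟩ := hω' i hi
          exact ⟨C, fun _ => hC⟩
        · exact ⟨0, fun hi' => absurd hi' hi⟩
      choose C hC using hex
      filter_upwards [eventually_ge_atTop ⌈(∑ i, (C i : ℝ)) / ε⌉₊] with n hn
      have hn' : (∑ i, (C i : ℝ)) ≤ ε * n := by
        have := (Nat.le_ceil _).trans (Nat.cast_le (α := ℝ).2 hn)
        rw [div_le_iff₀ hε] at this
        linarith
      rw [← EReal.coe_le_coe_iff, coe_toReal_mpInf (f := fun k => X (natRev n k) ω)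
        (fun k => h.ne_top _ ω) hne (fun k => hω _) n]
      refine le_iInf₂ fun i hi => ?_
      have h1 := hC i hi n
      rw [lvec_eq_xvec] at h1
      refine le_trans ?_ h1
      rw [EReal.coe_le_coe_iff]
      have h2 : (C i : ℝ) ≤ ∑ i, (C i : ℝ) :=
        Finset.single_le_sum (f := fun i => (C i : ℝ)) (fun _ _ => Nat.cast_nonneg _)
          (Finset.mem_univ i)
      linarith) hε
  rw [(hid N).integral_eq] at hNle
  have hlaw := h.iid.block_strong_law N (hmF N)
    (fun f g hfg => congrArg EReal.toReal (dependsOnCoords_mpInf N f g hfg)) (hW N)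
  have hN' : (0 : ℝ) < N := Nat.cast_pos.2 hN
  filter_upwards [hH, hlaw, h.tendsto_mpBoundSum] with ω h1 h2 h3
  refine exists_le_xvec_of_blocks (fun n => h.ne_top n ω) hne h1 (hsub ω) hN ?_ h2 h3
  refine lt_of_lt_of_le ?_ hNle
  exact mul_lt_mul_of_pos_right (by linarith) hN'

end IsMPSeq

section Graph

variable {d : ℕ} {r : Fin d → Fin d → Prop} {γ : Set (Fin d) → EReal}

theorem gammaBrack_sccOf (i : Fin d) : gammaBrack r γ (sccOf r i) = limFormula r γ i := by
  refine le_antisymm (iSup₂_le ?_) (iSup₂_le fun c' hc => ?_)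
  · rintro c' ⟨hc, j, hj, k, hk, hjk⟩
    exact le_limFormula hc ⟨k, hk, hj.1.trans hjk⟩
  · exact le_iSup₂_of_le c' ⟨hc.1, i, mem_sccOf i, hc.2⟩ le_rfl

theorem limFormula_eq_of_mem_Hset {i j : Fin d} (hj : j ∈ Hset r γ (sccOf r i)) :
    limFormula r γ j = limFormula r γ i := by
  obtain ⟨ct, hct, ⟨k, hk, hkj⟩, hreach, heq⟩ := hj
  refine le_antisymm (limFormula_anti (hk.1.trans hkj)) ?_
  rw [← gammaBrack_sccOf, ← heq]
  exact le_limFormula hct hreach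

theorem mem_Hset_sccOf_iff {i j : Fin d} : j ∈ Hset r γ (sccOf r i) ↔
    Relation.ReflTransGen r i j ∧ limFormula r γ j = limFormula r γ i := by
  refine ⟨fun hj => ⟨?_, limFormula_eq_of_mem_Hset hj⟩, fun ⟨hij, heq⟩ => ?_⟩
  · obtain ⟨ct, hct, ⟨k, hk, hkj⟩, hreach, heq⟩ := hj
    exact hk.1.trans hkj
  · obtain ⟨c, hc, hjc, hcl⟩ := exists_isSCC_eq_limFormula (r := r) γ j
    exact ⟨c, hc, ⟨i, mem_sccOf i, hij⟩, hjc, by rw [hcl, heq, gammaBrack_sccOf]⟩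

end Graph

section Restrict

variable {d : ℕ}

theorem mpTop_mpRestrict {c : Set (Fin d)} (hc : c.Nonempty)
    (f : ℕ → Fin d → Fin d → EReal) (n : ℕ) :
    mpTop (fun m => mpRestrict c (f m)) n =
      ⨆ i, ⨆ (_ : i ∈ c), xvec (fun m => mpRestrict c (f m)) n i := by
  refine le_antisymm (iSup_le fun i => ?_) (iSup_mono fun i => iSup_le fun _ => le_rfl)
  rcases n with _ | n
  · obtain ⟨k, hk⟩ := hc
    exact le_iSup₂_of_le (f := fun i (_ : i ∈ c) => xvec (fun m => mpRestrict c (f m)) 0 i)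
      k hk le_rfl
  · by_cases hi : i ∈ c
    · exact le_iSup₂_of_le (f := fun i (_ : i ∈ c) =>
        xvec (fun m => mpRestrict c (f m)) (n + 1) i) i hi le_rfl
    · simp [xvec, mpVec, mpRestrict, hi]

end Restrict

namespace IsMPSeq

variable {Ω : Type*} [MeasurableSpace Ω] {μ : Measure Ω} [IsProbabilityMeasure μ] {d : ℕ}
  {X : ℕ → Ω → Fin d → Fin d → EReal} {γ : Set (Fin d) → EReal}

theorem limFormula_ne_top (h : IsMPSeq X μ)
    (hγ : ∀ c, IsSCC (arcRel μ (X 0)) c → ∀ᵐ ω ∂μ, Tendsto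
      (fun n => mpScale n (mpTop (fun m => mpRestrict c (X m ω)) n)) atTop (𝓝 (γ c)))
    (i : Fin d) : limFormula (arcRel μ (X 0)) γ i ≠ ⊤ := by
  obtain ⟨c, hc, -, hcl⟩ := exists_isSCC_eq_limFormula (r := arcRel μ (X 0)) γ i
  rw [← hcl]
  exact ne_top_of_le_ne_top (EReal.coe_ne_top _)
    ((h.restrict c).exponent_le (hγ c hc) one_pos le_rfl)

theorem measure_slopeSet_ne_zero_of_lt (h : IsMPSeq X μ)
    (hγ : ∀ c, IsSCC (arcRel μ (X 0)) c → ∀ᵐ ω ∂μ, Tendsto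
      (fun n => mpScale n (mpTop (fun m => mpRestrict c (X m ω)) n)) atTop (𝓝 (γ c)))
    {i : Fin d} {H : Set (Fin d)} (hH : Hset (arcRel μ (X 0)) γ (sccOf (arcRel μ (X 0)) i) ⊆ H)
    {β : ℝ} (hβ : (β : EReal) < limFormula (arcRel μ (X 0)) γ i) :
    μ {ω | (fun n => mpRestrict H (X n ω)) ∈ slopeSet β i} ≠ 0 := by
  obtain ⟨c, hc, hic, hcl⟩ := exists_isSCC_eq_limFormula (r := arcRel μ (X 0)) γ i
  have hcoe := EReal.coe_toReal (h.limFormula_ne_top hγ i)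
    (ne_bot_of_gt hβ)
  set g := (limFormula (arcRel μ (X 0)) γ i).toReal
  rw [← hcoe, EReal.coe_lt_coe_iff] at hβ
  have := h.measure_slopeSet_ne_zero (H := H) (c := c) (g := g) (ε := g - β) (by linarith)
    (by rw [hcoe, ← hcl]; exact hγ c hc) hc hic fun a hia hac => hH (mem_Hset_sccOf_iff.2
      ⟨hia, le_antisymm (limFormula_anti hia) (hcl ▸ le_limFormula hc hac)⟩)
  simpa using this

/-- Lower bound for the growth of `x_i(n, 0)`. -/
theorem ae_exists_le_xvec (h : IsMPSeq X μ)
    (hγ : ∀ c, IsSCC (arcRel μ (X 0)) c → ∀ᵐ ω ∂μ, Tendsto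
      (fun n => mpScale n (mpTop (fun m => mpRestrict c (X m ω)) n)) atTop (𝓝 (γ c)))
    {i : Fin d} (hrow : ∀ᵐ ω ∂μ, ∀ k ∈ Hset (arcRel μ (X 0)) γ (sccOf (arcRel μ (X 0)) i),
      ∃ j ∈ Hset (arcRel μ (X 0)) γ (sccOf (arcRel μ (X 0)) i), X 0 ω k j ≠ ⊥)
    {β : ℝ} (hβ : (β : EReal) < limFormula (arcRel μ (X 0)) γ i) :
    ∀ᵐ ω ∂μ, ∃ C : ℝ, ∀ n : ℕ, ((β * n - C : ℝ) : EReal) ≤ xvec (fun m => X m ω) n i := by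
  set H := Hset (arcRel μ (X 0)) γ (sccOf (arcRel μ (X 0)) i) with hHdef
  have hiH : i ∈ H := mem_Hset_sccOf_iff.2 ⟨.refl, rfl⟩
  obtain ⟨β₁, hβ₁, hβ₁'⟩ := EReal.lt_iff_exists_real_btwn.1 hβ
  rw [EReal.coe_lt_coe_iff] at hβ₁
  have hrow' : ∀ᵐ ω ∂μ, ∀ n, ∀ k ∈ H, ∃ j ∈ H, mpRestrict H (X n ω) k j ≠ ⊥ := by
    have hm : MeasurableSet {M : Fin d → Fin d → EReal | ∀ k ∈ H, ∃ j ∈ H, M k j ≠ ⊥} := by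
      have : {M : Fin d → Fin d → EReal | ∀ k ∈ H, ∃ j ∈ H, M k j ≠ ⊥} =
          ⋂ k ∈ H, ⋃ j ∈ H, {M | M k j ≠ ⊥} := by
        ext M; simp
      rw [this]
      exact MeasurableSet.biInter (Set.to_countable _) fun k _ =>
        MeasurableSet.biUnion (Set.to_countable _) fun j _ => measurableSet_entry_ne_bot k j
    filter_upwards [h.ae_of_ae_zero hm hrow] with ω hω n k hk
    obtain ⟨j, hj, hne⟩ := hω n k hk
    exact ⟨j, hj, by rwa [mpRestrict_apply_of_mem hk hj]⟩
  have hslope : ∀ k ∈ H, ∀ᵐ ω ∂μ, (fun n => mpRestrict H (X n ω)) ∈ slopeSet β₁ k := by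
    intro k hk
    refine (h.restrict H).ae_mem_slopeSet hrow' (fun k hk => ?_) hk
    have hk' := mem_Hset_sccOf_iff.1 hk
    refine h.measure_slopeSet_ne_zero_of_lt hγ (fun a ha => ?_) (by rwa [hk'.2])
    have ha' := mem_Hset_sccOf_iff.1 ha
    exact mem_Hset_sccOf_iff.2 ⟨hk'.1.trans ha'.1, ha'.2.trans hk'.2⟩
  filter_upwards [(h.restrict H).ae_exists_le_xvec_of_slopeSet hrow'
    (fun ω n a b hab => (mem_of_mpRestrict_ne_bot hab).2) hslope hβ₁] with ω ⟨C, hC⟩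
  exact ⟨C, fun n => (hC i hiH n).trans (xvec_mono (fun n a b => mpRestrict_le H _ a b) n i)⟩

theorem tendsto_mpScale_xvec (h : IsMPSeq X μ)
    (hγ : ∀ c, IsSCC (arcRel μ (X 0)) c → ∀ᵐ ω ∂μ, Tendsto
      (fun n => mpScale n (mpTop (fun m => mpRestrict c (X m ω)) n)) atTop (𝓝 (γ c)))
    {i : Fin d} (hrow : ∀ᵐ ω ∂μ, ∀ k ∈ Hset (arcRel μ (X 0)) γ (sccOf (arcRel μ (X 0)) i),
      ∃ j ∈ Hset (arcRel μ (X 0)) γ (sccOf (arcRel μ (X 0)) i), X 0 ω k j ≠ ⊥) :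
    ∀ᵐ ω ∂μ, Tendsto (fun n => mpScale n (xvec (fun m => X m ω) n i)) atTop
      (𝓝 (limFormula (arcRel μ (X 0)) γ i)) := by
  have hu : ∀ᵐ ω ∂μ, ∀ q : ℚ, limFormula (arcRel μ (X 0)) γ i < ((q : ℝ) : EReal) →
      ∃ C : ℝ, ∀ n : ℕ, xvec (fun m => X m ω) n i ≤ (((q : ℝ) * n + C : ℝ) : EReal) := by
    refine ae_all_iff.2 fun q => ?_
    by_cases hq : limFormula (arcRel μ (X 0)) γ i < ((q : ℝ) : EReal)
    · filter_upwards [h.ae_exists_xvec_le hγ i hq] with ω hω _ using hω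
    · exact Eventually.of_forall fun _ hq' => absurd hq' hq
  have hl : ∀ᵐ ω ∂μ, ∀ q : ℚ, ((q : ℝ) : EReal) < limFormula (arcRel μ (X 0)) γ i →
      ∃ C : ℝ, ∀ n : ℕ, (((q : ℝ) * n - C : ℝ) : EReal) ≤ xvec (fun m => X m ω) n i := by
    refine ae_all_iff.2 fun q => ?_
    by_cases hq : ((q : ℝ) : EReal) < limFormula (arcRel μ (X 0)) γ i
    · filter_upwards [h.ae_exists_le_xvec hγ hrow hq] with ω hω _ using hω
    · exact Eventually.of_forall fun _ hq' => absurd hq' hq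
  filter_upwards [hu, hl] with ω hu hl
  refine tendsto_mpScale (fun a ha => ?_) fun a ha => ?_
  · obtain ⟨q, h1, h2⟩ := EReal.lt_iff_exists_rat_btwn.1 ha
    have h2' : (q : ℝ) < a := EReal.coe_lt_coe_iff.1 h2
    obtain ⟨C, hC⟩ := hu q h1
    filter_upwards [eventually_ge_atTop ⌈C / (a - q)⌉₊] with n hn
    refine (hC n).trans (EReal.coe_le_coe_iff.2 ?_)
    have := (Nat.le_ceil _).trans (Nat.cast_le (α := ℝ).2 hn)
    rw [div_le_iff₀ (by linarith)] at this
    linarith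
  · obtain ⟨q, h1, h2⟩ := EReal.lt_iff_exists_rat_btwn.1 ha
    have h1' : a < (q : ℝ) := EReal.coe_lt_coe_iff.1 h1
    obtain ⟨C, hC⟩ := hl q h2
    filter_upwards [eventually_ge_atTop ⌈C / (q - a)⌉₊] with n hn
    refine le_trans (EReal.coe_le_coe_iff.2 ?_) (hC n)
    have := (Nat.le_ceil _).trans (Nat.cast_le (α := ℝ).2 hn)
    rw [div_le_iff₀ (by linarith)] at this
    linarith

end IsMPSeq

section Frequently

variable {d : ℕ} {f : ℕ → Fin d → Fin d → EReal}

/-- If infinitely often row `i` only sees nodes of growth rate at most `α`, then the limit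
growth rate at `i` is at most `α`. -/
theorem mpScale_limit_le_of_frequently (hf : ∀ n i j, f n i j ≠ ⊤) {i : Fin d} {D : Set (Fin d)}
    (hbad : ∃ᶠ n in atTop, ∀ j, f n i j ≠ ⊥ → j ∈ D) {α m : ℝ}
    (hD : ∀ j ∈ D, ∃ C : ℝ, ∀ n : ℕ, xvec f n j ≤ ((α * n + C : ℝ) : EReal))
    (hB : Tendsto (fun n : ℕ => mpBoundSum f n / n) atTop (𝓝 m)) {l : EReal}
    (hl : Tendsto (fun n => mpScale n (xvec f n i)) atTop (𝓝 l)) : l ≤ α := by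
  by_contra hcon
  push Not at hcon
  obtain ⟨a, ha, hal⟩ := EReal.lt_iff_exists_real_btwn.1 hcon
  rw [EReal.coe_lt_coe_iff] at ha
  have hex : ∀ j, ∃ C : ℝ, 0 ≤ C ∧ (j ∈ D → ∀ n : ℕ, xvec f n j ≤ ((α * n + C : ℝ) : EReal)) := by
    intro j
    by_cases hj : j ∈ D
    · obtain ⟨C, hC⟩ := hD j hj
      refine ⟨|C|, abs_nonneg C, fun _ n => (hC n).trans (EReal.coe_le_coe_iff.2 ?_)⟩
      linarith [le_abs_self C]
    · exact ⟨0, le_rfl, fun hj' => absurd hj' hj⟩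
  choose C hC0 hC using hex
  obtain ⟨ε, hε, hεa⟩ : ∃ ε > 0, α + 2 * ε = a := ⟨(a - α) / 2, by linarith, by ring⟩
  obtain ⟨C₁, h₁⟩ := exists_mpBoundSum_block_le hB one_pos ε hε
  have hev := (tendsto_add_atTop_nat 1).eventually (eventually_ge_of_tendsto_mpScale hl hal)
  have hlarge : ∀ᶠ n : ℕ in atTop, C₁ + ∑ j, C j - a < ε * n :=
    (tendsto_natCast_atTop_atTop.const_mul_atTop hε).eventually_gt_atTop _
  obtain ⟨n, hn, h2, h3⟩ := (hbad.and_eventually (hev.and hlarge)).exists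
  have h4 := h₁ n
  simp only [mpBoundSum, seqShift, mul_one, Finset.range_one, Finset.sum_singleton,
    zero_add] at h4
  have h5 : xvec f (n + 1) i ≤ ((mpBound (f n) + (α * n + ∑ j, C j) : ℝ) : EReal) := by
    refine iSup_le fun j => ?_
    by_cases hj : f n i j = ⊥
    · simp [hj]
    · rw [EReal.coe_add]
      refine add_le_add (le_mpBound (hf n i j)) ((hC j (hn j hj) n).trans ?_)
      rw [EReal.coe_le_coe_iff]
      have := Finset.single_le_sum (f := C) (fun j _ => hC0 j) (Finset.mem_univ j)
      linarith
  have h6 := h2.trans h5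
  rw [EReal.coe_le_coe_iff] at h6
  push_cast at h6
  have h7 : a * n = α * n + 2 * (ε * n) := by rw [← hεa]; ring
  linarith

end Frequently

namespace IsMPSeq

variable {Ω : Type*} [MeasurableSpace Ω] {μ : Measure Ω} [IsProbabilityMeasure μ] {d : ℕ}
  {X : ℕ → Ω → Fin d → Fin d → EReal} {γ : Set (Fin d) → EReal}

theorem ae_frequently_mem (h : IsMPSeq X μ) {B : Set (Fin d → Fin d → EReal)}
    (hB : MeasurableSet B) (hpos : μ {ω | X 0 ω ∈ B} ≠ 0) :
    ∀ᵐ ω ∂μ, ∃ᶠ n in atTop, X n ω ∈ B := by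
  have hsm : ∀ n, MeasurableSet (X n ⁻¹' B) := fun n => h.iid.meas n hB
  have hind : iIndepSet (fun n => X n ⁻¹' B) μ := by
    rw [iIndepSet_iff_meas_biInter hsm]
    exact fun s => h.iid.indep.measure_inter_preimage_eq_mul s fun _ _ => hB
  have hmeas : ∀ n, μ (X n ⁻¹' B) = μ (X 0 ⁻¹' B) := fun n => by
    rw [← Measure.map_apply (h.iid.meas n) hB, h.iid.ident n, Measure.map_apply (h.iid.meas 0) hB]
  have hone := measure_limsup_eq_one hsm hind (by
    simp only [hmeas]
    exact ENNReal.tsum_const_eq_top_of_ne_zero hpos)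
  rw [← prob_compl_eq_zero_iff (MeasurableSet.measurableSet_limsup hsm)] at hone
  rw [ae_iff]
  convert hone using 2
  ext ω
  simp [mem_limsup_iff_frequently_mem]

/-- The orbit cannot almost surely be eventually slower than a rate below `limFormula`. -/
theorem limFormula_le_of_eventually_le (h : IsMPSeq X μ)
    (hγ : ∀ c, IsSCC (arcRel μ (X 0)) c → ∀ᵐ ω ∂μ, Tendsto
      (fun n => mpScale n (mpTop (fun m => mpRestrict c (X m ω)) n)) atTop (𝓝 (γ c)))
    {i : Fin d} {β : ℝ} (hβ : ∀ᵐ ω ∂μ, ∀ᶠ n : ℕ in atTop,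
      xvec (fun m => X m ω) n i ≤ ((β * n : ℝ) : EReal)) :
    limFormula (arcRel μ (X 0)) γ i ≤ β := by
  by_contra hcon
  push Not at hcon
  obtain ⟨b, hb, hbl⟩ := EReal.lt_iff_exists_real_btwn.1 hcon
  rw [EReal.coe_lt_coe_iff] at hb
  have hne := h.measure_slopeSet_ne_zero_of_lt hγ (Set.subset_univ _) hbl
  have huniv : ∀ M : Fin d → Fin d → EReal, mpRestrict Set.univ M = M := fun M => by
    funext i j; simp [mpRestrict]
  simp only [huniv] at hne
  obtain ⟨C, hC⟩ : ∃ C : ℕ, μ {ω | ∀ k : ℕ,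
      ((b * k - C : ℝ) : EReal) ≤ lvec k (fun n => X n ω) i} ≠ 0 := by
    by_contra hall
    push Not at hall
    refine hne (measure_mono_null ?_ (measure_iUnion_null hall))
    rintro ω ⟨C, hC⟩
    exact Set.mem_iUnion.2 ⟨C, hC⟩
  set S : ℕ → Set Ω := fun n => {ω | ((b * n - C : ℝ) : EReal) ≤ xvec (fun m => X m ω) n i}
  have hS : ∀ n, μ {ω | ∀ k : ℕ, ((b * k - C : ℝ) : EReal) ≤ lvec k (fun n => X n ω) i} ≤
      μ (S n) := by
    intro n
    have hid := (h.iid.identDistrib_reindex (natRev_injective n)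
      (measurable_xvec n i)).measure_mem_eq (measurableSet_Ici (a := ((b * n - C : ℝ) : EReal)))
    refine le_trans (measure_mono fun ω hω => ?_) hid.le
    have := hω n
    rwa [lvec_eq_xvec] at this
  have hlim := tendsto_measure_of_ae_tendsto_indicator_of_isFiniteMeasure (μ := μ) (As := S)
    (A := ∅) atTop MeasurableSet.empty
    (fun n => measurableSet_le measurable_const
      ((measurable_xvec n i).comp h.iid.measurable_seq)) (by
      filter_upwards [hβ] with ω hω
      have hlarge : ∀ᶠ n : ℕ in atTop, (C : ℝ) < (b - β) * n :=
        (tendsto_natCast_atTop_atTop.const_mul_atTop (sub_pos.2 hb)).eventually_gt_atTop _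
      filter_upwards [hω, hlarge] with n h1 h2
      refine ⟨fun h3 => ?_, fun h3 => h3.elim⟩
      have h4 := le_trans h3 h1
      rw [EReal.coe_le_coe_iff] at h4
      linarith)
  rw [measure_empty] at hlim
  exact hC (le_antisymm (ge_of_tendsto' hlim hS) zero_le)

/-- If `x(n, 0) / n` converges almost surely, then the submatrix indexed by `Hset` has no
trivial row. -/
theorem exists_mem_Hset_of_tendsto (h : IsMPSeq X μ)
    (hγ : ∀ c, IsSCC (arcRel μ (X 0)) c → ∀ᵐ ω ∂μ, Tendsto
      (fun n => mpScale n (mpTop (fun m => mpRestrict c (X m ω)) n)) atTop (𝓝 (γ c)))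
    (hrow : ∀ᵐ ω ∂μ, ∀ i, ∃ j, X 0 ω i j ≠ ⊥)
    (hconv : ∀ᵐ ω ∂μ, ∀ i, ∃ l : EReal,
      Tendsto (fun n => mpScale n (xvec (fun m => X m ω) n i)) atTop (𝓝 l))
    {c : Set (Fin d)} (hc : IsSCC (arcRel μ (X 0)) c) :
    ∀ᵐ ω ∂μ, ∀ i ∈ Hset (arcRel μ (X 0)) γ c, ∃ j ∈ Hset (arcRel μ (X 0)) γ c,
      X 0 ω i j ≠ ⊥ := by
  classical
  obtain ⟨i₀, hi₀⟩ := hc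
  replace hi₀ : c = sccOf (arcRel μ (X 0)) i₀ := hi₀
  subst hi₀
  set r := arcRel μ (X 0) with hr
  set H := Hset r γ (sccOf r i₀) with hHdef
  refine ae_all_iff.2 fun i => ?_
  by_cases hi : i ∈ H
  swap
  · exact Eventually.of_forall fun _ hi' => absurd hi' hi
  by_contra hcon
  set B : Set (Fin d → Fin d → EReal) := {M | ∀ j, M i j ≠ ⊥ → j ∉ H} with hBdef
  have hBm : MeasurableSet B := by
    have : B = ⋂ j, ({M | M i j ≠ ⊥}ᶜ ∪ {_M | j ∉ H}) := by
      ext M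
      simp only [hBdef, Set.mem_ofPred_eq, Set.mem_iInter, Set.mem_union, Set.mem_compl_iff]
      exact forall_congr' fun j => imp_iff_not_or
    rw [this]
    exact MeasurableSet.iInter fun j =>
      (measurableSet_entry_ne_bot i j).compl.union (MeasurableSet.const _)
  have hBpos : μ {ω | X 0 ω ∈ B} ≠ 0 := by
    intro h0
    refine hcon ?_
    filter_upwards [measure_eq_zero_iff_ae_notMem.1 h0] with ω hω _
    by_contra hno
    push Not at hno
    exact hω fun j hj hjH => hj (hno j hjH)
  have hi' := mem_Hset_sccOf_iff.1 hi
  set D : Finset (Fin d) := Finset.univ.filter fun j => r i j ∧ j ∉ H with hD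
  have hlt : ∀ j ∈ D, limFormula r γ j < limFormula r γ i := by
    intro j hj
    obtain ⟨hij, hjH⟩ := (Finset.mem_filter.1 hj).2
    refine lt_of_le_of_ne (limFormula_anti (.single hij)) fun heq => hjH ?_
    exact mem_Hset_sccOf_iff.2 ⟨hi'.1.tail hij, heq.trans hi'.2⟩
  have hDmem : ∀ᵐ ω ∂μ, ∀ n, X n ω ∈ B → ∀ j, X n ω i j ≠ ⊥ → j ∈ D := by
    filter_upwards [h.ae_arcRel] with ω hω n hn j hj
    exact Finset.mem_filter.2 ⟨Finset.mem_univ j, hω n i j hj, hn j hj⟩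
  have hbot : ⊥ < limFormula r γ i := by
    have hex : ∃ᵐ ω ∂μ, X 0 ω ∈ B := frequently_ae_iff.2 hBpos
    obtain ⟨ω, h1, h2, h3⟩ := (hex.and_eventually (hrow.and hDmem)).exists
    obtain ⟨j, hj⟩ := h2 i
    exact bot_le.trans_lt (hlt j (h3 0 h1 j hj))
  obtain ⟨α, hα, hαl⟩ := EReal.lt_iff_exists_real_btwn.1
    ((Finset.sup_lt_iff (f := limFormula r γ) hbot).2 hlt)
  obtain ⟨β, hβ, hβl⟩ := EReal.lt_iff_exists_real_btwn.1 hαl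
  refine not_le.2 hβl (h.limFormula_le_of_eventually_le hγ ?_)
  have hup : ∀ᵐ ω ∂μ, ∀ j, j ∈ D → ∃ C : ℝ, ∀ n : ℕ,
      xvec (fun m => X m ω) n j ≤ ((α * n + C : ℝ) : EReal) := by
    refine ae_all_iff.2 fun j => ?_
    by_cases hj : j ∈ D
    · filter_upwards [h.ae_exists_xvec_le hγ j ((Finset.le_sup hj).trans_lt hα)]
        with ω hω _ using hω
    · exact Eventually.of_forall fun _ hj' => absurd hj' hj
  filter_upwards [hup, hDmem, h.ae_frequently_mem hBm hBpos, h.tendsto_mpBoundSum, hconv]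
    with ω h1 h2 h3 h4 h5
  obtain ⟨l, hl⟩ := h5 i
  have hle := mpScale_limit_le_of_frequently (D := (D : Set (Fin d))) (fun n => h.ne_top n ω)
    (h3.mono fun n hn => h2 n hn) (fun j hj => h1 j hj) h4 hl
  exact eventually_le_of_tendsto_mpScale hl (hle.trans_lt hβ)

end IsMPSeq

open Classical in
/-- **Theorem (law of large numbers, independent case).**
If `(A(n))_{n∈ℕ}` are i.i.d. random `d × d` matrices over `ℝ_max`, a.s. with at least one
finite entry on each row, and `max_{A_{ij}(0) ≠ -∞} |A_{ij}(0)|` is integrable, then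
`(1/n) x(n,0)` converges a.s. iff for every s.c.c. `c` of `𝒢(A)` the submatrix of `A(0)`
indexed by `H_c` a.s. has at least one finite entry on each row; in that case the limit is
`max { γ^{(c)} : i → c }` in each coordinate `i`. -/
theorem cycle_time_iid_iff
    {d : ℕ} {Ω : Type*} [MeasurableSpace Ω] (μ : Measure Ω) [IsProbabilityMeasure μ]
    (A : ℕ → Ω → Fin d → Fin d → EReal)
    (hmeas : ∀ n, Measurable (A n))
    (hindep : iIndepFun A μ)
    (hident : ∀ n, μ.map (A n) = μ.map (A 0))
    (hnotop : ∀ n ω i j, A n ω i j ≠ ⊤)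
    (hrow : ∀ n, ∀ᵐ ω ∂μ, ∀ i, ∃ j, A n ω i j ≠ ⊥)
    (hint : Integrable
      (fun ω => ⨆ i, ⨆ j, if A 0 ω i j = ⊥ then (0 : ℝ) else |(A 0 ω i j).toReal|) μ)
    (γ : Set (Fin d) → EReal)
    (hγ : ∀ c : Set (Fin d), IsSCC (arcRel μ (A 0)) c →
      ∀ᵐ ω ∂μ, Tendsto
        (fun n => mpScale n (⨆ i, ⨆ (_ : i ∈ c), xvec (fun m => mpRestrict c (A m ω)) n i))
        atTop (𝓝 (γ c))) :
    ((∀ᵐ ω ∂μ, ∀ i, ∃ l : EReal,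
        Tendsto (fun n => mpScale n (xvec (fun m => A m ω) n i)) atTop (𝓝 l)) ↔
      (∀ c : Set (Fin d), IsSCC (arcRel μ (A 0)) c →
        ∀ᵐ ω ∂μ, ∀ i ∈ Hset (arcRel μ (A 0)) γ c, ∃ j ∈ Hset (arcRel μ (A 0)) γ c,
          A 0 ω i j ≠ ⊥)) ∧
    ((∀ c : Set (Fin d), IsSCC (arcRel μ (A 0)) c →
        ∀ᵐ ω ∂μ, ∀ i ∈ Hset (arcRel μ (A 0)) γ c, ∃ j ∈ Hset (arcRel μ (A 0)) γ c,
          A 0 ω i j ≠ ⊥) →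
      ∀ᵐ ω ∂μ, ∀ i, Tendsto (fun n => mpScale n (xvec (fun m => A m ω) n i)) atTop
        (𝓝 (limFormula (arcRel μ (A 0)) γ i))) := by
  have h : IsMPSeq A μ := ⟨⟨hmeas, hindep, hident⟩, hnotop, hint⟩
  have hγ' : ∀ c, IsSCC (arcRel μ (A 0)) c → ∀ᵐ ω ∂μ, Tendsto
      (fun n => mpScale n (mpTop (fun m => mpRestrict c (A m ω)) n)) atTop (𝓝 (γ c)) := by
    intro c hc
    have hne : c.Nonempty := by
      obtain ⟨i, rfl⟩ := hc
      exact ⟨i, .refl, .refl⟩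
    filter_upwards [hγ c hc] with ω hω
    simpa only [mpTop_mpRestrict hne fun m => A m ω] using hω
  have hsuff : (∀ c : Set (Fin d), IsSCC (arcRel μ (A 0)) c →
        ∀ᵐ ω ∂μ, ∀ i ∈ Hset (arcRel μ (A 0)) γ c, ∃ j ∈ Hset (arcRel μ (A 0)) γ c,
          A 0 ω i j ≠ ⊥) →
      ∀ᵐ ω ∂μ, ∀ i, Tendsto (fun n => mpScale n (xvec (fun m => A m ω) n i)) atTop
        (𝓝 (limFormula (arcRel μ (A 0)) γ i)) := fun hH =>
    ae_all_iff.2 fun i => h.tendsto_mpScale_xvec hγ' (hH _ (isSCC_sccOf i))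
  refine ⟨⟨fun hconv c hc => h.exists_mem_Hset_of_tendsto hγ' (hrow 0) hconv hc, fun hH => ?_⟩,
    hsuff⟩
  filter_upwards [hsuff hH] with ω hω i using ⟨_, hω i⟩
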